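/- arXiv:2202.05646 — 5 statements merged into one kernel-verified Lean document; each statement's English description precedes it below -/
import Mathlib

section
/- Let g be a holomorphic function on the punctured unit disc 𝔻* and let c ∈ ℂ. Assume that for every θ ∈ ℝ there exists a branch L_θ of the logarithm on 𝔻 ∖ l^θ such that the map z ↦ g(z) + (c/(2πi))·L_θ(z) is injective on 𝔻 ∖ l^θ. Then g cannot have an essential singularity at 0; that is, there exists n ∈ ℕ such that z ↦ z^n·g(z) extends holomorphically across 0. -/
open Complex Metric Set Filter Topology

/-- The closed ray `{t·e^{iθ} : t ≥ 0} ⊆ ℂ`. -/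
def lray (θ : ℝ) : Set ℂ :=
  {z : ℂ | ∃ t : ℝ, 0 ≤ t ∧ z = (t : ℂ) * Complex.exp (θ * Complex.I)}

lemma bloch_aux {f : ℂ → ℂ} {z₀ : ℂ} {R : ℝ} (hR : 0 < R)
    (hf : DifferentiableOn ℂ f (ball z₀ R)) :
    ∃ b : ℂ, ball b (R * ‖deriv f z₀‖ / 96) ⊆ f '' ball z₀ R := by
  by_cases h0 : deriv f z₀ = 0
  · exact ⟨0, by simp [h0]⟩
  have hd : DifferentiableOn ℂ (deriv f) (ball z₀ R) := hf.deriv isOpen_ball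
  have hsub : closedBall z₀ (R / 2) ⊆ ball z₀ R := closedBall_subset_ball (by linarith)
  have hcont : ContinuousOn (fun z => ‖deriv f z‖ * (R / 2 - dist z z₀)) (closedBall z₀ (R / 2)) := by
    have := hd.continuousOn.mono hsub
    fun_prop
  obtain ⟨p, hp, hmax⟩ := (isCompact_closedBall z₀ (R / 2)).exists_isMaxOn
    ⟨z₀, mem_closedBall_self (by linarith)⟩ hcont
  have hmax' : ∀ z ∈ closedBall z₀ (R / 2), ‖deriv f z‖ * (R / 2 - dist z z₀) ≤
    ‖deriv f p‖ * (R / 2 - dist p z₀) := fun z hz => hmax hz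
  obtain ⟨m, hm⟩ : ∃ m, m = ‖deriv f p‖ := ⟨_, rfl⟩
  obtain ⟨s, hs⟩ : ∃ s, s = (R / 2 - dist p z₀) / 2 := ⟨_, rfl⟩
  have h1 := hmax' z₀ (mem_closedBall_self (by linarith))
  rw [dist_self, sub_zero, ← hm, show R / 2 - dist p z₀ = 2 * s by linarith] at h1
  have hpos : 0 < ‖deriv f z₀‖ * (R / 2) := by positivity
  have hm0 : 0 ≤ m := hm ▸ norm_nonneg _
  have hs0' : 0 ≤ s := by
    have := mem_closedBall.1 hp
    linarith
  have hms : 0 < m * (2 * s) := lt_of_lt_of_le hpos h1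
  have hmpos : 0 < m := by
    rcases hm0.eq_or_lt with h | h
    · rw [← h] at hms; simp at hms
    · exact h
  have hspos : 0 < s := by
    rcases hs0'.eq_or_lt with h | h
    · rw [← h] at hms; simp at hms
    · exact h
  have hballs : ball p s ⊆ closedBall z₀ (R / 2) := by
    intro z hz
    rw [mem_ball] at hz
    rw [mem_closedBall]
    have := dist_triangle z p z₀
    linarith
  have hbound : ∀ z ∈ ball p s, ‖deriv f z‖ ≤ 2 * m := by
    intro z hz
    have h2 := hmax' z (hballs hz)
    rw [← hm, show R / 2 - dist p z₀ = 2 * s by linarith] at h2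
    have h3 : s ≤ R / 2 - dist z z₀ := by
      rw [mem_ball] at hz
      have := dist_triangle z p z₀
      linarith
    have h4 : ‖deriv f z‖ * s ≤ (2 * m) * s := by
      have := mul_le_mul_of_nonneg_left h3 (norm_nonneg (deriv f z))
      linarith
    exact le_of_mul_le_mul_right h4 hspos
  have hsub2 : ball p s ⊆ ball z₀ R := hballs.trans hsub
  have hschw : ∀ z ∈ ball p s, dist (deriv f z) (deriv f p) ≤ 3 * m / s * dist z p := by
    intro z hz
    refine Complex.dist_le_div_mul_dist_of_mapsTo_ball (hd.mono hsub2) ?_ hz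
    intro w hw
    rw [mem_closedBall, dist_eq_norm]
    have := norm_sub_le (deriv f w) (deriv f p)
    have := hbound w hw
    linarith
  have hs6 : closedBall p (s / 6) ⊆ ball p s := closedBall_subset_ball (by linarith)
  have hder : ∀ z ∈ closedBall p (s / 6), ‖deriv f z - deriv f p‖ ≤ m / 2 := by
    intro z hz
    have h2 := hschw z (hs6 hz)
    rw [dist_eq_norm] at h2
    refine h2.trans ?_
    calc 3 * m / s * dist z p ≤ 3 * m / s * (s / 6) := by
          gcongr
          exact mem_closedBall.1 hz
      _ = m / 2 := by field_simp; norm_num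
  have hfd : ∀ z ∈ ball p s, HasDerivAt f (deriv f z) z := fun z hz =>
    (hf.differentiableAt (isOpen_ball.mem_nhds (hsub2 hz))).hasDerivAt
  have hpc : p ∈ closedBall p (s / 6) := mem_closedBall_self (by linarith)
  have hlin : ∀ z ∈ closedBall p (s / 6), m / 2 * ‖z - p‖ ≤ ‖f z - f p‖ := by
    intro z hz
    have h2 := (convex_closedBall p (s / 6)).norm_image_sub_le_of_norm_hasDerivWithin_le
      (f := fun z => f z - deriv f p * z) (f' := fun z => deriv f z - deriv f p) (C := m / 2)
      (fun w hw => by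
        have := (hfd w (hs6 hw)).sub ((hasDerivAt_id w).const_mul (deriv f p))
        exact (this.congr_deriv (by simp)).hasDerivWithinAt) hder hpc hz
    have h3 : ‖deriv f p * (z - p)‖ ≤ ‖f z - f p‖ +
        ‖f z - deriv f p * z - (f p - deriv f p * p)‖ := by
      have := norm_sub_le (f z - f p) (f z - deriv f p * z - (f p - deriv f p * p))
      refine le_trans (le_of_eq ?_) this
      congr 1
      ring
    rw [norm_mul, ← hm] at h3
    linarith
  refine ⟨f p, ?_⟩
  have hcl : closure (ball p (s / 6)) ⊆ ball z₀ R :=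
    (closure_ball_subset_closedBall).trans (hs6.trans hsub2)
  have key := DiffContOnCl.ball_subset_image_closedBall (f := f) (z₀ := p) (r := s / 6)
    (ε := m * s / 12) ((hf.mono hcl).diffContOnCl) (by linarith)
    (by
      intro z hz
      have h2 := hlin z (sphere_subset_closedBall hz)
      rw [← dist_eq_norm z p, mem_sphere.1 hz] at h2
      linarith)
    (by
      have hev : ∀ᶠ z in 𝓝[≠] p, f z ≠ f p := by
        have : ∀ᶠ z in 𝓝[≠] p, z ∈ closedBall p (s / 6) :=
          nhdsWithin_le_nhds (closedBall_mem_nhds p (by linarith))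
        filter_upwards [this, self_mem_nhdsWithin] with z hz hne heq
        have h2 := hlin z hz
        rw [heq, sub_self, norm_zero] at h2
        have : 0 < ‖z - p‖ := norm_pos_iff.2 (sub_ne_zero.2 hne)
        nlinarith
      exact hev.frequently.filter_mono nhdsWithin_le_nhds)
  refine (ball_subset_ball ?_).trans (key.trans (image_mono (hs6.trans hsub2)))
  linarith

lemma koebe_aux {f : ℂ → ℂ} {z₀ : ℂ} {R : ℝ} (hR : 0 < R)
    (hf : DifferentiableOn ℂ f (ball z₀ R)) (hne : ∀ z ∈ ball z₀ R, f z ≠ 0)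
    (hinj : InjOn f (ball z₀ R)) :
    ‖deriv f z₀‖ * R ≤ 400 * ‖f z₀‖ := by
  have hd : DifferentiableOn ℂ (deriv f) (ball z₀ R) := hf.deriv isOpen_ball
  have hz₀ : z₀ ∈ ball z₀ R := mem_ball_self hR
  obtain ⟨l, hl⟩ : ∃ l : ℂ → ℂ, ∀ z ∈ ball z₀ R, HasDerivAt l (deriv f z / f z) z :=
    (hd.div hf hne).isExactOn_ball
  have hconst : ∀ z ∈ ball z₀ R, f z * Complex.exp (-l z) = f z₀ * Complex.exp (-l z₀) := by
    intro z hz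
    have h := (convex_ball z₀ R).norm_image_sub_le_of_norm_hasDerivWithin_le
      (f := fun z => f z * Complex.exp (-l z)) (f' := fun _ => 0) (C := 0)
      (fun w hw => by
        have h1 := (hf.differentiableAt (isOpen_ball.mem_nhds hw)).hasDerivAt
        have h2 := h1.mul ((hl w hw).neg.cexp)
        have h3 := hne w hw
        refine (h2.congr_deriv ?_).hasDerivWithinAt
        field_simp
        simp) (by simp) hz₀ hz
    simp only [zero_mul, norm_le_zero_iff] at h
    exact sub_eq_zero.1 h
  obtain ⟨b, hb⟩ := bloch_aux hR (f := l) (z₀ := z₀)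
    (fun z hz => (hl z hz).differentiableAt.differentiableWithinAt)
  rw [(hl z₀ hz₀).deriv, norm_div] at hb
  have hf0 : 0 < ‖f z₀‖ := norm_pos_iff.2 (hne z₀ hz₀)
  by_contra hcon
  push Not at hcon
  have hbig : Real.pi < R * (‖deriv f z₀‖ / ‖f z₀‖) / 96 := by
    have h1 : 400 < R * (‖deriv f z₀‖ / ‖f z₀‖) := by
      rw [← mul_div_assoc, lt_div_iff₀ hf0]
      linarith
    have := Real.pi_lt_d2
    linarith
  have hpi : ‖(Real.pi : ℂ) * Complex.I‖ = Real.pi := by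
    simp [abs_of_pos Real.pi_pos]
  obtain ⟨z1, hz1, h1⟩ := hb (show b + Real.pi * Complex.I ∈ _ by
    rw [mem_ball, dist_eq_norm, add_sub_cancel_left, hpi]; exact hbig)
  obtain ⟨z2, hz2, h2⟩ := hb (show b - Real.pi * Complex.I ∈ _ by
    rw [mem_ball, dist_eq_norm, sub_sub_cancel_left, norm_neg, hpi]; exact hbig)
  have hexp : Complex.exp (-l z2) = Complex.exp (-l z1) := by
    rw [h1, h2, show -(b - Real.pi * Complex.I) = -(b + Real.pi * Complex.I) +
      2 * Real.pi * Complex.I by ring, Complex.exp_add, Complex.exp_two_pi_mul_I, mul_one]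
  have h3 := (hconst z1 hz1).trans (hconst z2 hz2).symm
  rw [hexp] at h3
  have h4 := hinj hz1 hz2 (mul_right_cancel₀ (Complex.exp_ne_zero _) h3)
  rw [h4] at h1
  have h5 : (2 * Real.pi * Complex.I : ℂ) = 0 := by linear_combination h2 - h1
  exact Complex.two_pi_I_ne_zero h5

lemma ball_subset_slit {θ : ℝ} {z : ℂ} (hz : ‖z‖ ≤ 1 / 4)
    (hre : (z * Complex.exp (-(θ * Complex.I))).re ≤ 0) :
    ball z ‖z‖ ⊆ ball (0 : ℂ) (1 / 2) \ lray θ := by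
  intro w hw
  rw [mem_ball, dist_eq_norm] at hw
  refine ⟨?_, ?_⟩
  · rw [mem_ball_zero_iff]
    have := norm_le_norm_add_norm_sub' w z
    linarith
  · rintro ⟨t, ht, rfl⟩
    obtain ⟨v, hv⟩ : ∃ v, v = z * Complex.exp (-(θ * Complex.I)) := ⟨_, rfl⟩
    rw [← hv] at hre
    have hz' : z = v * Complex.exp (θ * Complex.I) := by
      rw [hv, mul_assoc, ← Complex.exp_add]; simp
    have hvn : ‖z‖ = ‖v‖ := by
      rw [hz', norm_mul, Complex.norm_exp_ofReal_mul_I, mul_one]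
    rw [hvn, hz', ← sub_mul, norm_mul, Complex.norm_exp_ofReal_mul_I, mul_one] at hw
    have h1 : ‖(t : ℂ) - v‖ ^ 2 < ‖v‖ ^ 2 := by gcongr
    rw [← Complex.normSq_eq_norm_sq, ← Complex.normSq_eq_norm_sq, Complex.normSq_apply,
      Complex.normSq_apply] at h1
    simp at h1
    nlinarith [mul_nonneg ht (neg_nonneg.2 hre)]

lemma half_bound (g : ℂ → ℂ) (k : ℂ) (θ : ℝ) (L : ℂ → ℂ)
    (hg : DifferentiableOn ℂ g (ball (0 : ℂ) 1 \ {0}))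
    (hL : DifferentiableOn ℂ L (ball (0 : ℂ) 1 \ lray θ))
    (hexp : ∀ z ∈ ball (0 : ℂ) 1 \ lray θ, Complex.exp (L z) = z)
    (hinj : InjOn (fun z => g z + k * L z) (ball (0 : ℂ) 1 \ lray θ)) :
    ∃ K : ℝ, ∀ z : ℂ, z ≠ 0 → ‖z‖ ≤ 1 / 4 →
      (z * Complex.exp (-(θ * Complex.I))).re ≤ 0 → ‖z ^ 400 * g z‖ ≤ K := by
  have h0 : (0 : ℂ) ∈ lray θ := ⟨0, le_rfl, by simp⟩
  have hU0 : ball (0 : ℂ) 1 \ lray θ ⊆ ball (0 : ℂ) 1 \ {0} := by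
    rintro z ⟨hz, hz'⟩
    exact ⟨hz, fun h => hz' (by rw [mem_singleton_iff.1 h]; exact h0)⟩
  have hsubU : ball (0 : ℂ) (1 / 2) \ lray θ ⊆ ball (0 : ℂ) 1 \ lray θ :=
    sdiff_subset_sdiff_left (ball_subset_ball (by norm_num))
  obtain ⟨p, hp⟩ : ∃ p : ℂ, p = -(3 / 4) * Complex.exp (θ * Complex.I) := ⟨_, rfl⟩
  have hpn : ‖p‖ = 3 / 4 := by
    rw [hp, norm_mul, Complex.norm_exp_ofReal_mul_I]; norm_num
  have hpU : p ∈ ball (0 : ℂ) 1 \ lray θ := by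
    refine ⟨by rw [mem_ball_zero_iff, hpn]; norm_num, ?_⟩
    rintro ⟨t, ht, h⟩
    rw [hp] at h
    have := congrArg Complex.re (mul_right_cancel₀ (Complex.exp_ne_zero _) h)
    norm_num at this
    linarith
  obtain ⟨a, ha⟩ : ∃ a, a = g p + k * L p := ⟨_, rfl⟩
  obtain ⟨ψ, hψ⟩ : ∃ ψ : ℂ → ℂ, ψ = fun z => g z + k * L z - a := ⟨_, rfl⟩
  have hψd : DifferentiableOn ℂ ψ (ball (0 : ℂ) 1 \ lray θ) := by
    rw [hψ]
    exact ((hg.mono hU0).add (hL.const_mul k)).sub_const a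
  have hψinj : InjOn ψ (ball (0 : ℂ) 1 \ lray θ) := by
    intro x hx y hy hxy
    refine hinj hx hy ?_
    simp only [hψ] at hxy
    exact sub_left_injective hxy
  have hψne : ∀ z ∈ ball (0 : ℂ) (1 / 2) \ lray θ, ψ z ≠ 0 := by
    intro z hz h
    have : z = p := by
      refine hψinj (hsubU hz) hpU ?_
      rw [h]; simp [hψ, ha]
    have h2 := mem_ball_zero_iff.1 hz.1
    rw [this, hpn] at h2
    norm_num at h2
  -- local facts at points of the half disc
  have hloc : ∀ z : ℂ, z ≠ 0 → ‖z‖ ≤ 1 / 4 → (z * Complex.exp (-(θ * Complex.I))).re ≤ 0 →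
      z ∈ ball (0 : ℂ) 1 \ lray θ ∧ DifferentiableAt ℂ ψ z ∧ HasDerivAt L z⁻¹ z ∧
      ‖deriv ψ z‖ * ‖z‖ ≤ 400 * ‖ψ z‖ := by
    intro z hz0 hz hre
    have hb := ball_subset_slit hz hre
    have hpos : 0 < ‖z‖ := norm_pos_iff.2 hz0
    have hb1 := hb.trans hsubU
    have hzb : z ∈ ball z ‖z‖ := mem_ball_self hpos
    have hnh : ball (0 : ℂ) 1 \ lray θ ∈ 𝓝 z := mem_of_superset (ball_mem_nhds z hpos) hb1
    refine ⟨hb1 hzb, hψd.differentiableAt hnh, ?_, ?_⟩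
    · have h1 := (hL.differentiableAt hnh).hasDerivAt
      have h2 : HasDerivAt (fun w => Complex.exp (L w)) 1 z := by
        refine (hasDerivAt_id z).congr_of_eventuallyEq ?_
        filter_upwards [hnh] with w hw
        exact hexp w hw
      have h3 := h1.cexp.unique h2
      rw [hexp z (hb1 hzb)] at h3
      rw [← eq_inv_of_mul_eq_one_right h3]
      exact h1
    · exact koebe_aux hpos (hψd.mono hb1) (fun w hw => hψne w (hb hw)) (hψinj.mono hb1)
  obtain ⟨S, hS⟩ : ∃ S : Set ℂ, S = sphere (0 : ℂ) (1 / 4) ∩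
    {z | (z * Complex.exp (-(θ * Complex.I))).re ≤ 0} := ⟨_, rfl⟩
  have hScomp : IsCompact S := by
    rw [hS]
    refine (isCompact_sphere _ _).inter_right (isClosed_le ?_ continuous_const)
    fun_prop
  have hSU : S ⊆ ball (0 : ℂ) 1 \ lray θ := by
    rw [hS]
    rintro z ⟨hz, hre⟩
    rw [mem_sphere_zero_iff_norm] at hz
    exact (hloc z (by rintro rfl; norm_num at hz) hz.le hre).1
  obtain ⟨A, hA⟩ := hScomp.exists_bound_of_continuousOn (hψd.continuousOn.mono hSU)
  obtain ⟨B, hB⟩ := hScomp.exists_bound_of_continuousOn (hL.continuousOn.mono hSU)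
  refine ⟨‖a‖ + A + ‖k‖ * (B + 1), ?_⟩
  intro z hz0 hz hre
  have hpos : 0 < ‖z‖ := norm_pos_iff.2 hz0
  obtain ⟨T, hT⟩ : ∃ T, T = -Real.log (4 * ‖z‖) := ⟨_, rfl⟩
  have hT0 : 0 ≤ T := by
    rw [hT]
    have := Real.log_nonpos (by positivity) (show 4 * ‖z‖ ≤ 1 by linarith)
    linarith
  have hTe : ‖z‖ * Real.exp T = 1 / 4 := by
    rw [hT, Real.exp_neg, Real.exp_log (by positivity)]
    field_simp
  obtain ⟨γ, hγ⟩ : ∃ γ : ℝ → ℂ, γ = fun t => (Real.exp (T - t) : ℂ) * z := ⟨_, rfl⟩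
  have hγn : ∀ t, ‖γ t‖ = Real.exp (T - t) * ‖z‖ := by
    intro t
    rw [hγ]
    simp only [norm_mul, Complex.norm_real, Real.norm_eq_abs, abs_of_pos (Real.exp_pos _)]
  have hγ0 : ∀ t, γ t ≠ 0 := by
    intro t
    rw [← norm_pos_iff, hγn]
    positivity
  have hγre : ∀ t, (γ t * Complex.exp (-(θ * Complex.I))).re ≤ 0 := by
    intro t
    rw [hγ]
    simp only [mul_assoc]
    rw [Complex.re_ofReal_mul]
    exact mul_nonpos_of_nonneg_of_nonpos (Real.exp_pos _).le hre
  have hγle : ∀ t, 0 ≤ t → ‖γ t‖ ≤ 1 / 4 := by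
    intro t ht
    rw [hγn, ← hTe, mul_comm]
    gcongr
    linarith
  have hγT : γ T = z := by simp [hγ]
  have hγS : γ 0 ∈ S := by
    rw [hS]
    refine ⟨?_, hγre 0⟩
    rw [mem_sphere_zero_iff_norm, hγn, sub_zero, mul_comm, hTe]
  have hγd : ∀ t, HasDerivAt γ (-γ t) t := by
    intro t
    have h1 : HasDerivAt (fun t : ℝ => Real.exp (T - t)) (Real.exp (T - t) * (-1)) t :=
      ((hasDerivAt_id t).const_sub T).exp
    have h2 := h1.ofReal_comp.mul_const z
    rw [hγ]
    refine h2.congr_deriv ?_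
    push_cast
    ring
  have hψγ : ∀ t, 0 ≤ t → HasDerivAt (fun t => ψ (γ t)) (deriv ψ (γ t) * (-γ t)) t := by
    intro t ht
    exact (hloc _ (hγ0 t) (hγle t ht) (hγre t)).2.1.hasDerivAt.comp t (hγd t)
  have hLγ : ∀ t, 0 ≤ t → HasDerivAt (fun t => L (γ t)) (-1) t := by
    intro t ht
    refine ((hloc _ (hγ0 t) (hγle t ht) (hγre t)).2.2.1.comp t (hγd t)).congr_deriv ?_
    have := hγ0 t
    field_simp
  have e1 := norm_le_gronwallBound_of_norm_deriv_right_le (f := fun t => ψ (γ t))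
    (f' := fun t => deriv ψ (γ t) * (-γ t)) (δ := A) (K := 400) (ε := 0) (a := 0) (b := T)
    (fun t ht => (hψγ t ht.1).continuousAt.continuousWithinAt)
    (fun t ht => (hψγ t ht.1).hasDerivWithinAt) (hA _ hγS)
    (fun t ht => by
      rw [norm_mul, norm_neg, add_zero]
      exact (hloc _ (hγ0 t) (hγle t ht.1) (hγre t)).2.2.2) T ⟨hT0, le_rfl⟩
  have e2 := norm_le_gronwallBound_of_norm_deriv_right_le (f := fun t => L (γ t))
    (f' := fun t => -1) (δ := B) (K := 0) (ε := 1) (a := 0) (b := T)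
    (fun t ht => (hLγ t ht.1).continuousAt.continuousWithinAt)
    (fun t ht => (hLγ t ht.1).hasDerivWithinAt) (hB _ hγS)
    (fun t ht => by simp) T ⟨hT0, le_rfl⟩
  simp only [hγT, sub_zero, gronwallBound_ε0, gronwallBound_K0, one_mul] at e1 e2
  have hA0 : 0 ≤ A := (norm_nonneg _).trans (hA _ hγS)
  have hB0 : 0 ≤ B := (norm_nonneg _).trans (hB _ hγS)
  have hgz : g z = a + ψ z - k * L z := by simp only [hψ]; ring
  have hgn : ‖g z‖ ≤ ‖a‖ + A * Real.exp (400 * T) + ‖k‖ * (B + T) := by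
    rw [hgz]
    refine (norm_sub_le _ _).trans ?_
    rw [norm_mul]
    gcongr
    refine (norm_add_le _ _).trans ?_
    gcongr
  obtain ⟨x, hx⟩ : ∃ x, x = ‖z‖ ^ 400 := ⟨_, rfl⟩
  have hx0 : 0 ≤ x := hx ▸ by positivity
  have hx1 : x ≤ 1 := hx ▸ pow_le_one₀ hpos.le (by linarith)
  have hxz : x ≤ ‖z‖ := hx ▸ pow_le_of_le_one hpos.le (by linarith) (by norm_num)
  have hxe : x * Real.exp (400 * T) ≤ 1 := by
    have : Real.exp (400 * T) = Real.exp T ^ 400 := by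
      rw [← Real.exp_nat_mul]; norm_num
    rw [this, hx, ← mul_pow, hTe]
    exact pow_le_one₀ (by norm_num) (by norm_num)
  have hxT : x * T ≤ 1 := by
    have h1 : T ≤ Real.exp T := by linarith [Real.add_one_le_exp T]
    have h2 : x * T ≤ ‖z‖ * Real.exp T := by gcongr
    linarith
  rw [norm_mul, norm_pow, ← hx]
  calc x * ‖g z‖ ≤ x * (‖a‖ + A * Real.exp (400 * T) + ‖k‖ * (B + T)) := by gcongr
    _ = x * ‖a‖ + A * (x * Real.exp (400 * T)) + ‖k‖ * (x * B + x * T) := by ring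
    _ ≤ 1 * ‖a‖ + A * 1 + ‖k‖ * (1 * B + 1) := by gcongr
    _ = _ := by ring

/-- Proposition on injective developing maps: if for every `θ` some
branch `φ_θ = g + (c/2πi)·log` is injective on `𝔻 ∖ l^θ`, then `g` has no essential
singularity at `0`, i.e. `z^n·g(z)` extends holomorphically across `0` for some `n`. -/
theorem no_essential_singularity_of_injective_branches
    (g : ℂ → ℂ) (c : ℂ)
    (hg : DifferentiableOn ℂ g (ball (0 : ℂ) 1 \ {0}))
    (hyp : ∀ θ : ℝ, ∃ L : ℂ → ℂ,
      DifferentiableOn ℂ L (ball (0 : ℂ) 1 \ lray θ) ∧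
      (∀ z ∈ ball (0 : ℂ) 1 \ lray θ, Complex.exp (L z) = z) ∧
      InjOn (fun z => g z + c / (2 * (Real.pi : ℂ) * Complex.I) * L z)
        (ball (0 : ℂ) 1 \ lray θ)) :
    ∃ n : ℕ, ∃ G : ℂ → ℂ, DifferentiableOn ℂ G (ball (0 : ℂ) 1) ∧
      ∀ z ∈ ball (0 : ℂ) 1 \ {0}, G z = z ^ n * g z := by
  obtain ⟨L₁, hL₁, he₁, hi₁⟩ := hyp 0
  obtain ⟨L₂, hL₂, he₂, hi₂⟩ := hyp Real.pi
  obtain ⟨K₁, hK₁⟩ := half_bound g _ 0 L₁ hg hL₁ he₁ hi₁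
  obtain ⟨K₂, hK₂⟩ := half_bound g _ Real.pi L₂ hg hL₂ he₂ hi₂
  have hd : DifferentiableOn ℂ (fun z => z ^ 400 * g z) (ball (0 : ℂ) 1 \ {0}) :=
    (differentiableOn_pow 400).mul hg
  have hbd : ∀ z ∈ ball (0 : ℂ) (1 / 4) \ {0}, ‖z ^ 400 * g z‖ ≤ max K₁ K₂ := by
    rintro z ⟨hz, hz0⟩
    rw [mem_ball_zero_iff] at hz
    rcases le_total z.re 0 with h | h
    · exact (hK₁ z hz0 hz.le (by simpa using h)).trans (le_max_left _ _)
    · refine (hK₂ z hz0 hz.le ?_).trans (le_max_right _ _)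
      rw [Complex.exp_neg, Complex.exp_pi_mul_I]
      simpa using h
  have hG := Complex.differentiableOn_update_limUnder_of_bddAbove
    (f := fun z => z ^ 400 * g z) (s := ball (0 : ℂ) (1 / 4)) (c := 0)
    (ball_mem_nhds _ (by norm_num))
    (hd.mono (sdiff_subset_sdiff_left (ball_subset_ball (by norm_num))))
    ⟨max K₁ K₂, by rintro _ ⟨z, hz, rfl⟩; exact hbd z hz⟩
  refine ⟨400, Function.update (fun z => z ^ 400 * g z) 0
    (limUnder (𝓝[≠] 0) fun z => z ^ 400 * g z), ?_, ?_⟩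
  · intro z hz
    by_cases hz0 : z = 0
    · subst hz0
      exact (hG.differentiableAt (ball_mem_nhds _ (by norm_num))).differentiableWithinAt
    · have hnh : ball (0 : ℂ) 1 \ {0} ∈ 𝓝 z :=
        (isOpen_ball.sdiff isClosed_singleton).mem_nhds ⟨hz, hz0⟩
      refine ((hd.differentiableAt hnh).congr_of_eventuallyEq ?_).differentiableWithinAt
      filter_upwards [hnh] with w hw
      exact Function.update_of_ne hw.2 _ _
  · intro z hz
    exact Function.update_of_ne hz.2 _ _
end

section
/- Let g be a holomorphic function on the punctured unit disc 𝔻* and let c ∈ ℂ. Assume that for every θ ∈ ℝ there exists a branch L_θ of the logarithm on 𝔻 ∖ l^θ such that the map φ_θ(z) = g(z) + (c/(2πi))·L_θ(z) is injective on 𝔻 ∖ l^θ. Then for every such θ and branch L_θ, the function φ_θ has a limit in the Riemann sphere as z → 0 within 𝔻 ∖ l^θ: there exists p in the one-point compactification ℂ ∪ {∞} of ℂ such that φ_θ(z) → p as z → 0 with z ∈ 𝔻 ∖ l^θ (convergence to ∞ meaning |φ_θ(z)| → ∞). -/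
open Complex Metric Set Filter Topology

lemma bloch_aux_s5 {l : ℂ → ℂ} {c : ℂ} {r : ℝ} (hr : 0 < r)
    (hl : DifferentiableOn ℂ l (ball c r))
    (hne : ∀ z ∈ ball c r, ∀ w ∈ ball c r, l z ≠ l w + 2 * Real.pi * I) :
    r * ‖deriv l c‖ ≤ 320 * Real.pi := by
  have hpi := Real.pi_pos
  have hd : DifferentiableOn ℂ (deriv l) (ball c r) := hl.deriv isOpen_ball
  set s := r / 2 with hs
  have hs0 : 0 < s := by positivity
  have hsub : closedBall c s ⊆ ball c r := closedBall_subset_ball (by linarith)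
  obtain ⟨z0, hz0, hmax⟩ := (isCompact_closedBall c s).exists_isMaxOn
    (f := fun z => (s - dist z c) * ‖deriv l z‖) ⟨c, mem_closedBall_self hs0.le⟩
    (by
      have := (hd.continuousOn.mono hsub).norm
      exact (by fun_prop : Continuous fun z => s - dist z c).continuousOn.mul this)
  have hmax' : ∀ z ∈ closedBall c s, (s - dist z c) * ‖deriv l z‖ ≤ (s - dist z0 c) * ‖deriv l z0‖ :=
    fun z hz => hmax hz
  have hc := hmax' c (mem_closedBall_self hs0.le)
  simp only [dist_self, sub_zero] at hc
  set A := ‖deriv l z0‖ with hA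
  set ρ := (s - dist z0 c) / 2 with hρ
  have hz0' : dist z0 c ≤ s := hz0
  suffices hkey : A * ρ ≤ 80 * Real.pi by
    have : r * ‖deriv l c‖ = 2 * (s * ‖deriv l c‖) := by rw [hs]; ring
    have : (s - dist z0 c) * A = 2 * (A * ρ) := by rw [hρ]; ring
    linarith
  by_contra! hcon
  have hA0 : 0 ≤ A := norm_nonneg _
  have hρ0' : 0 ≤ ρ := by rw [hρ]; linarith
  have hρ0 : 0 < ρ := by
    rcases hρ0'.eq_or_lt with h | h
    · rw [← h] at hcon; simp at hcon; linarith
    · exact h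
  have hA1 : 0 < A := by
    rcases hA0.eq_or_lt with h | h
    · rw [← h] at hcon; simp at hcon; linarith
    · exact h
  have hb1 : ball z0 ρ ⊆ closedBall c s := by
    intro z hz
    have h1 : dist z z0 < ρ := hz
    have := dist_triangle z z0 c
    have h2 : s - dist z0 c = 2 * ρ := by rw [hρ]; ring
    exact mem_closedBall.2 (by linarith)
  have hbd : ∀ z ∈ ball z0 ρ, ‖deriv l z‖ ≤ 2 * A := by
    intro z hz
    have h1 : dist z z0 < ρ := hz
    have := dist_triangle z z0 c
    have h2 : s - dist z0 c = 2 * ρ := by rw [hρ]; ring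
    have h3 := hmax' z (hb1 hz)
    have h4 : ρ * ‖deriv l z‖ ≤ ρ * (2 * A) := by
      calc ρ * ‖deriv l z‖ ≤ (s - dist z c) * ‖deriv l z‖ := by gcongr; linarith
        _ ≤ _ := h3
        _ = _ := by rw [h2]; ring
    exact le_of_mul_le_mul_left h4 hρ0
  have hsch : ∀ z ∈ ball z0 ρ, ‖deriv l z - deriv l z0‖ ≤ (3 * A) / ρ * dist z z0 := by
    intro z hz
    rw [← dist_eq_norm]
    refine dist_le_div_mul_dist_of_mapsTo_ball (hd.mono (hb1.trans hsub)) ?_ hz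
    intro w hw
    rw [mem_closedBall, dist_eq_norm]
    have := norm_sub_le (deriv l w) (deriv l z0)
    have := hbd w hw
    linarith
  set t := ρ / 6 with ht
  have ht0 : 0 < t := by positivity
  have htsub : closedBall z0 t ⊆ ball z0 ρ := closedBall_subset_ball (by rw [ht]; linarith)
  have hlow : ∀ z ∈ closedBall z0 t, A * dist z z0 / 2 ≤ ‖l z - l z0‖ := by
    intro z hz
    have hmv := (convex_closedBall z0 t).norm_image_sub_le_of_norm_hasDerivWithin_le
      (f := fun z => l z - deriv l z0 * z) (f' := fun z => deriv l z - deriv l z0) (C := A / 2)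
      (fun x hx => by
        have hx' : x ∈ ball c r := hsub (hb1 (htsub hx))
        have h1 := ((hl.differentiableAt (isOpen_ball.mem_nhds hx')).hasDerivAt)
        have h2 := (hasDerivAt_id x).const_mul (deriv l z0)
        simpa using (h1.fun_sub h2).hasDerivWithinAt)
      (fun x hx => by
        refine (hsch x (htsub hx)).trans ?_
        have : dist x z0 ≤ t := hx
        calc 3 * A / ρ * dist x z0 ≤ 3 * A / ρ * t := by gcongr
          _ = A / 2 := by rw [ht]; field_simp; norm_num)
      (mem_closedBall_self ht0.le) hz
    have h3 : deriv l z0 * (z - z0) = (l z - l z0) -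
      ((l z - deriv l z0 * z) - (l z0 - deriv l z0 * z0)) := by ring
    have h4 : A * dist z z0 ≤ ‖l z - l z0‖ + A / 2 * ‖z - z0‖ := by
      rw [hA, dist_eq_norm, ← norm_mul, h3]
      exact (norm_sub_le _ _).trans (by gcongr)
    rw [← dist_eq_norm z z0] at h4
    linarith
  have hcov := DiffContOnCl.ball_subset_image_closedBall (f := l) (z₀ := z0) (r := t)
    (ε := A * t / 2)
    ((hl.mono (htsub.trans (hb1.trans hsub))).diffContOnCl_ball subset_rfl) ht0
    (fun z hz => by
      have := hlow z (sphere_subset_closedBall hz)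
      rwa [mem_sphere.1 hz] at this)
    (by
      have h1 : ∀ᶠ z in 𝓝[≠] z0, l z ≠ l z0 := by
        have : ∀ᶠ z in 𝓝[≠] z0, z ∈ closedBall z0 t :=
          nhdsWithin_le_nhds (closedBall_mem_nhds z0 ht0)
        filter_upwards [this, self_mem_nhdsWithin] with z hz hzne h
        have h5 := hlow z hz
        rw [h, sub_self, norm_zero] at h5
        have : 0 < dist z z0 := dist_pos.2 hzne
        have : 0 < A * dist z z0 := by positivity
        linarith
      exact h1.frequently.filter_mono nhdsWithin_le_nhds)
  have hmem : l z0 + 2 * Real.pi * I ∈ ball (l z0) (A * t / 2 / 2) := by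
    rw [mem_ball, dist_eq_norm]
    simp only [add_sub_cancel_left]
    have : ‖(2 * Real.pi * I : ℂ)‖ = 2 * Real.pi := by simp [abs_of_pos hpi]
    rw [this, ht]
    linarith
  obtain ⟨z, hz, hzz⟩ := hcov hmem
  exact hne z (hsub (hb1 (htsub hz))) z0 (hsub hz0) hzz

lemma koebe_aux_s5 {f : ℂ → ℂ} {c w : ℂ} {r : ℝ} (hr : 0 < r)
    (hf : DifferentiableOn ℂ f (ball c r)) (hinj : InjOn f (ball c r))
    (hw : ∀ z ∈ ball c r, f z ≠ w) :
    r * ‖deriv f c‖ ≤ 320 * Real.pi * ‖f c - w‖ := by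
  have hc : c ∈ ball c r := mem_ball_self hr
  have hne : ∀ z ∈ ball c r, f z - w ≠ 0 := fun z hz => sub_ne_zero.2 (hw z hz)
  have hd : DifferentiableOn ℂ (deriv f) (ball c r) := hf.deriv isOpen_ball
  have hp : DifferentiableOn ℂ (fun z => deriv f z / (f z - w)) (ball c r) :=
    hd.div (hf.sub_const w) hne
  obtain ⟨l, hlc, hl⟩ := (hp.isExactOn_ball).with_val_at c (Complex.log (f c - w))
  have hexp : ∀ z ∈ ball c r, exp (l z) = f z - w := by
    have hconst : ∀ z ∈ ball c r, HasDerivAt (fun z => exp (-l z) * (f z - w)) 0 z := by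
      intro z hz
      have h1 := ((hl z hz).fun_neg).cexp
      have h2 := ((hf.differentiableAt (isOpen_ball.mem_nhds hz)).hasDerivAt).sub_const w
      have h3 := h1.fun_mul h2
      have h4 : cexp (-l z) * -(deriv f z / (f z - w)) * (f z - w) + cexp (-l z) * deriv f z
          = 0 := by
        have := hne z hz
        field_simp
        ring
      rw [h4] at h3
      exact h3
    intro z hz
    have h3 := isOpen_ball.is_const_of_deriv_eq_zero (convex_ball c r).isPreconnected
      (fun x hx => (hconst x hx).differentiableAt.differentiableWithinAt)
      (fun x hx => (hconst x hx).deriv) hz hc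
    simp only [hlc] at h3
    rw [exp_neg, exp_neg, exp_log (hne c hc), inv_mul_cancel₀ (hne c hc)] at h3
    field_simp at h3
    exact h3.symm
  have hb := bloch_aux_s5 hr (l := l) (fun z hz => (hl z hz).differentiableAt.differentiableWithinAt)
    (by
      intro z hz z' hz' h
      have h1 : f z - w = f z' - w := by
        rw [← hexp z hz, ← hexp z' hz', h, exp_add, exp_two_pi_mul_I, mul_one]
      have h2 := hinj hz hz' (sub_left_injective h1)
      rw [h2] at h
      have := two_pi_I_ne_zero
      simp at h)
  rw [(hl c hc).deriv, norm_div] at hb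
  have h0 : 0 < ‖f c - w‖ := norm_pos_iff.2 (hne c hc)
  rw [← mul_div_assoc, div_le_iff₀ h0] at hb
  exact hb

lemma second_aux {f : ℂ → ℂ} {c : ℂ}
    (hf : DifferentiableOn ℂ f (ball c 1)) (hinj : InjOn f (ball c 1)) (h0 : deriv f c ≠ 0) :
    ‖deriv (deriv f) c‖ ≤ 6400 * Real.pi * ‖deriv f c‖ := by
  have hpi := Real.pi_pos
  have hc1 : c ∈ ball c 1 := mem_ball_self one_pos
  have hq : DifferentiableOn ℂ (dslope f c) (ball c 1) :=
    (differentiableOn_dslope (isOpen_ball.mem_nhds hc1)).2 hf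
  have hsub : closedBall c (1/2) ⊆ ball c 1 := closedBall_subset_ball (by norm_num)
  have hqne : ∀ z ∈ ball c 1, dslope f c z ≠ 0 := by
    intro z hz
    rcases eq_or_ne z c with rfl | hne
    · rwa [dslope_same]
    · rw [dslope_of_ne _ hne, slope_def_field]
      exact div_ne_zero (sub_ne_zero.2 fun h => hne (hinj hz hc1 h)) (sub_ne_zero.2 hne)
  obtain ⟨z1, hz1, hmin⟩ := (isCompact_sphere c (1/2)).exists_isMinOn
    (f := fun z => ‖dslope f c z‖) (NormedSpace.sphere_nonempty.2 (by norm_num))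
    (hq.continuousOn.mono (sphere_subset_closedBall.trans hsub)).norm
  have hz1b : z1 ∈ ball c 1 := hsub (sphere_subset_closedBall hz1)
  have hm0 : 0 < ‖dslope f c z1‖ := norm_pos_iff.2 (hqne z1 hz1b)
  have hle : ‖dslope f c z1‖ ≤ ‖deriv f c‖ := by
    have h1 := Complex.norm_le_of_forall_mem_frontier_norm_le (U := ball c (1/2))
      (f := fun z => (dslope f c z)⁻¹) (C := ‖dslope f c z1‖⁻¹) isBounded_ball
      (((hq.fun_inv hqne).mono hsub).diffContOnCl_ball subset_rfl)
      (by
        intro z hz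
        rw [frontier_ball _ (by norm_num)] at hz
        rw [norm_inv]
        exact inv_anti₀ hm0 (hmin hz))
      (subset_closure (mem_ball_self (by norm_num : (0:ℝ) < 1/2)))
    rw [norm_inv, dslope_same] at h1
    exact (inv_le_inv₀ (norm_pos_iff.2 h0) hm0).1 h1
  set w := f z1 with hw
  have hz1c : dist z1 c = 1/2 := hz1
  have hz1ne : z1 ≠ c := by rintro rfl; simp at hz1c
  have hfw : ‖f c - w‖ ≤ ‖deriv f c‖ / 2 := by
    rw [dslope_of_ne _ hz1ne, slope_def_field, norm_div, ← dist_eq_norm z1 c, hz1c] at hle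
    rw [norm_sub_rev]
    linarith
  have hwne : ∀ z ∈ ball c (1/2), f z ≠ w := by
    intro z hz h
    have := hinj (hsub (ball_subset_closedBall hz)) hz1b h
    rw [this, mem_ball, hz1c] at hz
    exact lt_irrefl _ hz
  have hpb : ∀ z ∈ ball c (1/4), ‖deriv f z / (f z - w)‖ ≤ 1280 * Real.pi := by
    intro z hz
    have hs : ball z (1/4) ⊆ ball c (1/2) := by
      apply ball_subset_ball'
      have : dist z c < 1/4 := hz
      linarith
    have hs' := hs.trans (ball_subset_closedBall.trans hsub)
    have h1 := koebe_aux_s5 (w := w) (by norm_num : (0:ℝ) < 1/4) (hf.mono hs') (hinj.mono hs')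
      (fun x hx => hwne x (hs hx))
    have h2 : f z - w ≠ 0 := sub_ne_zero.2 (hwne z (hs (mem_ball_self (by norm_num))))
    rw [norm_div, div_le_iff₀ (norm_pos_iff.2 h2)]
    linarith
  have hd : DifferentiableOn ℂ (deriv f) (ball c 1) := hf.deriv isOpen_ball
  have hs4 : ball c (1/4) ⊆ ball c 1 := ball_subset_ball (by norm_num)
  have hs42 : ball c (1/4) ⊆ ball c (1/2) := ball_subset_ball (by norm_num)
  have hp : DifferentiableOn ℂ (fun z => deriv f z / (f z - w)) (ball c (1/4)) :=
    (hd.mono hs4).div ((hf.mono hs4).sub_const w) (fun z hz => sub_ne_zero.2 (hwne z (hs42 hz)))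
  have hcs : closedBall c (1/8) ⊆ ball c (1/4) := closedBall_subset_ball (by norm_num)
  have hcau := Complex.norm_deriv_le_of_forall_mem_sphere_norm_le (by norm_num : (0:ℝ) < 1/8)
    ((hp.mono hcs).diffContOnCl_ball subset_rfl)
    (fun z hz => hpb z (hcs (sphere_subset_closedBall hz)))
  have hcw : f c - w ≠ 0 := sub_ne_zero.2 (hwne c (mem_ball_self (by norm_num)))
  have hder : HasDerivAt (fun z => deriv f z / (f z - w)) _ c :=
    ((hd.differentiableAt (isOpen_ball.mem_nhds hc1)).hasDerivAt).div
      (((hf.differentiableAt (isOpen_ball.mem_nhds hc1)).hasDerivAt).sub_const w) hcw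
  have hpc := hpb c (mem_ball_self (by norm_num))
  have hid : deriv (deriv f) c = deriv (fun z => deriv f z / (f z - w)) c * (f c - w)
      + (deriv f c / (f c - w)) * deriv f c := by
    rw [hder.deriv]
    field_simp
    ring
  rw [hid]
  refine (norm_add_le _ _).trans ?_
  rw [norm_mul, norm_mul]
  have e1 : ‖deriv (fun z => deriv f z / (f z - w)) c‖ * ‖f c - w‖
      ≤ (1280 * Real.pi / (1/8)) * (‖deriv f c‖ / 2) := by gcongr
  have e2 : ‖deriv f c / (f c - w)‖ * ‖deriv f c‖ ≤ 1280 * Real.pi * ‖deriv f c‖ := by gcongr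
  linarith

lemma second_le {f : ℂ → ℂ} {c : ℂ}
    (hf : DifferentiableOn ℂ f (ball c 2)) (hinj : InjOn f (ball c 2)) :
    ‖deriv (deriv f) c‖ ≤ 6400 * Real.pi * ‖deriv f c‖ := by
  have hpt : ∀ z ∈ ball c 1, deriv f z ≠ 0 →
      ‖deriv (deriv f) z‖ ≤ 6400 * Real.pi * ‖deriv f z‖ := by
    intro z hz h0
    have hs : ball z 1 ⊆ ball c 2 := by
      apply ball_subset_ball'
      have : dist z c < 1 := hz
      linarith
    exact second_aux (hf.mono hs) (hinj.mono hs) h0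
  have hc : c ∈ ball c 2 := mem_ball_self (by norm_num)
  have han : AnalyticAt ℂ f c := hf.analyticAt (isOpen_ball.mem_nhds hc)
  rcases han.deriv.eventually_eq_zero_or_eventually_ne_zero with h | h
  · have h1 : deriv f =ᶠ[𝓝 c] fun _ => (0:ℂ) := h
    rw [h1.deriv_eq]
    simp
    positivity
  · have h1 : Tendsto (fun z => ‖deriv (deriv f) z‖) (𝓝[≠] c) (𝓝 ‖deriv (deriv f) c‖) :=
      han.deriv.deriv.continuousAt.norm.tendsto.mono_left nhdsWithin_le_nhds
    have h2 : Tendsto (fun z => 6400 * Real.pi * ‖deriv f z‖) (𝓝[≠] c)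
        (𝓝 (6400 * Real.pi * ‖deriv f c‖)) :=
      (han.deriv.continuousAt.norm.tendsto.mono_left nhdsWithin_le_nhds).const_mul _
    refine le_of_tendsto_of_tendsto h1 h2 ?_
    have : ∀ᶠ z in 𝓝[≠] c, z ∈ ball c 1 := nhdsWithin_le_nhds (ball_mem_nhds c one_pos)
    filter_upwards [h, this] with z hz hz'
    exact hpt z hz' hz

lemma exp_mem_slit {θ : ℝ} {ζ : ℂ} (h0 : ζ.re < 0) (h1 : θ < ζ.im) (h2 : ζ.im < θ + 2 * Real.pi) :
    exp ζ ∈ ball (0 : ℂ) 1 \ lray θ := by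
  have hpi := Real.pi_pos
  refine ⟨by rw [mem_ball_zero_iff, norm_exp]; exact Real.exp_lt_one_iff.2 h0, ?_⟩
  rintro ⟨t, ht, h⟩
  have ht0 : 0 < t := by
    rcases ht.eq_or_lt with rfl | h'
    · simp at h
    · exact h'
  have h3 : exp ζ = exp (Real.log t + θ * I) := by
    rw [h, exp_add, ← ofReal_exp, Real.exp_log ht0]
  obtain ⟨n, hn⟩ := exp_eq_exp_iff_exists_int.1 h3
  have him : ζ.im = θ + n * (2 * Real.pi) := by
    rw [hn]; simp
  have hn0 : (0:ℝ) < n := by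
    by_contra! hh
    nlinarith
  have hn1 : (n:ℝ) < 1 := by
    by_contra! hh
    nlinarith
  have : 0 < n := by exact_mod_cast hn0
  have : n < 1 := by exact_mod_cast hn1
  omega

lemma strip_log {θ : ℝ} {L : ℂ → ℂ} (hL : DifferentiableOn ℂ L (ball (0 : ℂ) 1 \ lray θ))
    (hexp : ∀ z ∈ ball (0 : ℂ) 1 \ lray θ, Complex.exp (L z) = z) :
    ∃ k : ℂ, ∀ ζ : ℂ, ζ.re < 0 → θ < ζ.im → ζ.im < θ + 2 * Real.pi →
      L (exp ζ) = ζ + k := by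
  have hpi := Real.pi_pos
  set S : Set ℂ := {ζ | ζ.re < 0} ∩ ({ζ | θ < ζ.im} ∩ {ζ | ζ.im < θ + 2 * Real.pi}) with hS
  have hSo : IsOpen S := (isOpen_lt continuous_re continuous_const).inter
    ((isOpen_lt continuous_const continuous_im).inter (isOpen_lt continuous_im continuous_const))
  have hSc : Convex ℝ S := (convex_halfSpace_re_lt 0).inter
    ((convex_halfSpace_im_gt θ).inter (convex_halfSpace_im_lt _))
  have hmap : ∀ ζ ∈ S, exp ζ ∈ ball (0 : ℂ) 1 \ lray θ := fun ζ h => exp_mem_slit h.1 h.2.1 h.2.2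
  have hopen : IsOpen (ball (0 : ℂ) 1 \ lray θ) := by
    refine isOpen_ball.sdiff ?_
    have : lray θ = (fun z : ℂ => z * exp (-(θ * I))) ⁻¹' (((↑) : ℝ → ℂ) '' Ici 0) := by
      ext z
      constructor
      · rintro ⟨t, ht, rfl⟩
        refine ⟨t, ht, ?_⟩
        simp only
        rw [mul_assoc, ← exp_add]; simp
      · rintro ⟨t, ht, h⟩
        refine ⟨t, ht, ?_⟩
        simp only at h
        rw [h, mul_assoc, ← exp_add]; simp
    rw [this]
    refine IsClosed.preimage (by fun_prop) ?_
    exact Complex.isometry_ofReal.isClosedEmbedding.isClosedMap _ isClosed_Ici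
  have hder : ∀ ζ ∈ S, HasDerivAt (fun ζ => L (exp ζ) - ζ) 0 ζ := by
    intro ζ hζ
    have h1 := (hL.differentiableAt (hopen.mem_nhds (hmap ζ hζ))).hasDerivAt.comp ζ
      (hasDerivAt_exp ζ)
    have h2 := h1.cexp
    have h3 : (fun x => exp ((L ∘ exp) x)) =ᶠ[𝓝 ζ] exp := by
      filter_upwards [hSo.mem_nhds hζ] with x hx
      exact hexp _ (hmap x hx)
    have h4 := (h2.congr_of_eventuallyEq h3.symm).unique (hasDerivAt_exp ζ)
    simp only [Function.comp_apply, hexp _ (hmap ζ hζ)] at h4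
    have h5 : deriv L (exp ζ) * exp ζ = 1 := by
      have := exp_ne_zero ζ
      exact mul_left_cancel₀ this (by rw [h4, mul_one])
    have h6 := h1.fun_sub (hasDerivAt_id ζ)
    rw [h5, sub_self] at h6
    exact h6
  set ζ0 : ℂ := ⟨-1, θ + Real.pi⟩ with hζ0
  have hm : ζ0 ∈ S := ⟨by simp [hζ0], by simp [hζ0, hpi], by simp [hζ0]; linarith⟩
  refine ⟨L (exp ζ0) - ζ0, fun ζ h0 h1 h2 => ?_⟩
  have := hSo.is_const_of_deriv_eq_zero hSc.isPreconnected
      (fun x hx => (hder x hx).differentiableAt.differentiableWithinAt)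
      (fun x hx => (hder x hx).deriv) (⟨h0, h1, h2⟩ : ζ ∈ S) hm
  rw [← this]; ring

lemma exists_strip {θ : ℝ} {z : ℂ} (hz : z ∈ ball (0 : ℂ) 1 \ lray θ) :
    ∃ ζ : ℂ, exp ζ = z ∧ ζ.re < 0 ∧ θ < ζ.im ∧ ζ.im < θ + 2 * Real.pi := by
  have hpi := Real.pi_pos
  have hz0 : z ≠ 0 := by
    rintro rfl
    exact hz.2 ⟨0, le_rfl, by simp⟩
  have hz1 : ‖z‖ < 1 := by simpa using hz.1
  obtain ⟨n, hn, -⟩ := existsUnique_add_zsmul_mem_Ico Real.two_pi_pos z.arg θ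
  have hexp : exp (Real.log ‖z‖ + (z.arg + n • (2 * Real.pi) : ℝ) * I) = z := by
    have : (Real.log ‖z‖ + (z.arg + n • (2 * Real.pi) : ℝ) * I : ℂ)
      = Complex.log z + n * (2 * Real.pi * I) := by
      apply Complex.ext <;> simp [log_re, log_im]
    rw [this, exp_add, exp_int_mul_two_pi_mul_I, mul_one, exp_log hz0]
  refine ⟨_, hexp, ?_, ?_, ?_⟩
  · simpa using Real.log_neg (norm_pos_iff.2 hz0) hz1
  · have him : (Real.log ‖z‖ + (z.arg + n • (2 * Real.pi) : ℝ) * I : ℂ).im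
        = z.arg + n • (2 * Real.pi) := by simp
    rw [him]
    refine lt_of_le_of_ne hn.1 fun h => hz.2 ⟨‖z‖, norm_nonneg _, ?_⟩
    rw [← h, exp_add, ← ofReal_exp, Real.exp_log (norm_pos_iff.2 hz0)] at hexp
    exact hexp.symm
  · simpa using hn.2

lemma growth (g : ℂ → ℂ) (a : ℂ)
    (hg : DifferentiableOn ℂ g (ball (0 : ℂ) 1 \ {0}))
    (hyp : ∀ θ : ℝ, ∃ L : ℂ → ℂ,
      DifferentiableOn ℂ L (ball (0 : ℂ) 1 \ lray θ) ∧
      (∀ z ∈ ball (0 : ℂ) 1 \ lray θ, Complex.exp (L z) = z) ∧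
      InjOn (fun z => g z + a * L z) (ball (0 : ℂ) 1 \ lray θ)) :
    ∃ (N : ℕ) (D : ℝ), ∀ z : ℂ, z ≠ 0 → ‖z‖ < Real.exp (-3) → ‖z ^ N * g z‖ ≤ D := by
  have hpi := Real.pi_pos
  have hpi3 := Real.pi_gt_three
  set Φ : ℂ → ℂ := fun ζ => g (exp ζ) + a * ζ with hΦ
  set H : Set ℂ := {ζ : ℂ | ζ.re < 0} with hH
  have hHo : IsOpen H := isOpen_lt continuous_re continuous_const
  have hΦd : DifferentiableOn ℂ Φ H := by
    have h1 : MapsTo exp H (ball (0 : ℂ) 1 \ {0}) := fun ζ hζ =>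
      ⟨by rw [mem_ball_zero_iff, norm_exp]; exact Real.exp_lt_one_iff.2 hζ, exp_ne_zero ζ⟩
    exact (hg.comp differentiable_exp.differentiableOn h1).add
      (by fun_prop : Differentiable ℂ fun ζ : ℂ => a * ζ).differentiableOn
  have hinj : ∀ θ : ℝ, InjOn Φ {ζ : ℂ | ζ.re < 0 ∧ θ < ζ.im ∧ ζ.im < θ + 2 * Real.pi} := by
    intro θ
    obtain ⟨L, hL, hLe, hLi⟩ := hyp θ
    obtain ⟨k, hk⟩ := strip_log hL hLe
    rintro x ⟨hx0, hx1, hx2⟩ y ⟨hy0, hy1, hy2⟩ hxy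
    have h1 := hk x hx0 hx1 hx2
    have h2 := hk y hy0 hy1 hy2
    have h3 := hLi (exp_mem_slit hx0 hx1 hx2) (exp_mem_slit hy0 hy1 hy2) (by
      simp only [h1, h2]
      simp only [hΦ] at hxy
      linear_combination hxy)
    rw [h3, h2] at h1
    exact (add_right_cancel h1).symm
  set C := 6400 * Real.pi with hC
  have hC1 : 1 ≤ C := by rw [hC]; linarith
  have hsec : ∀ ζ : ℂ, ζ.re ≤ -3 → ‖deriv (deriv Φ) ζ‖ ≤ C * ‖deriv Φ ζ‖ := by
    intro ζ hζ
    have hb : ∀ x ∈ ball ζ 2, x.re < 0 ∧ ζ.im - Real.pi < x.im ∧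
        x.im < ζ.im - Real.pi + 2 * Real.pi := by
      intro x hx
      rw [mem_ball, dist_eq_norm] at hx
      have h1 := (abs_le.1 ((abs_re_le_norm (x - ζ)).trans hx.le))
      have h2 := (abs_le.1 ((abs_im_le_norm (x - ζ)).trans hx.le))
      simp only [sub_re, sub_im] at h1 h2
      refine ⟨by linarith, by linarith, by linarith⟩
    exact second_le (hΦd.mono fun x hx => (hb x hx).1) ((hinj (ζ.im - Real.pi)).mono hb)
  have hΦd' : DifferentiableOn ℂ (deriv Φ) H := hΦd.deriv hHo
  -- bound on the segment
  set γ : ℝ → ℝ → ℂ := fun y t => ((-3 - t : ℝ) : ℂ) + y * I with hγ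
  have hγH : ∀ y t, 0 ≤ t → γ y t ∈ H := by
    intro y t ht
    change (γ y t).re < 0
    simp [hγ]
    linarith
  obtain ⟨δ, hδ⟩ := (isCompact_Icc (a := -Real.pi) (b := Real.pi)).exists_bound_of_continuousOn
    (f := fun y : ℝ => (Φ (γ y 0), deriv Φ (γ y 0)))
    (by
      have hc : Continuous fun y : ℝ => γ y 0 := by simp only [hγ]; fun_prop
      exact (hΦd.continuousOn.comp hc.continuousOn fun y _ => hγH y 0 le_rfl).prodMk
        (hΦd'.continuousOn.comp hc.continuousOn fun y _ => hγH y 0 le_rfl))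
  have hδ0 : 0 ≤ δ := (norm_nonneg _).trans (hδ 0 ⟨by linarith, by linarith⟩)
  have hgr : ∀ y ∈ Icc (-Real.pi) Real.pi, ∀ T : ℝ, 0 ≤ T → ‖Φ (γ y T)‖ ≤ δ * Real.exp (C * T) := by
    intro y hy T hT
    have hd : ∀ t, 0 ≤ t → HasDerivAt (fun t => (Φ (γ y t), deriv Φ (γ y t)))
        (-deriv Φ (γ y t), -deriv (deriv Φ) (γ y t)) t := by
      intro t ht
      have hγd : HasDerivAt (γ y) (-1) t := by
        have h1 : HasDerivAt (fun t : ℝ => (-3 - t : ℝ)) (-1) t := by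
          simpa using (hasDerivAt_id t).const_sub (-3)
        have h2 := h1.ofReal_comp.add_const (y * I)
        rw [ofReal_neg, ofReal_one] at h2
        exact h2
      have h2 := (hΦd.differentiableAt (hHo.mem_nhds (hγH y t ht))).hasDerivAt.comp t hγd
      have h3 := (hΦd'.differentiableAt (hHo.mem_nhds (hγH y t ht))).hasDerivAt.comp t hγd
      simpa using h2.prodMk h3
    have := norm_le_gronwallBound_of_norm_deriv_right_le (a := 0) (b := T) (δ := δ) (K := C) (ε := 0)
      (f := fun t => (Φ (γ y t), deriv Φ (γ y t)))
      (f' := fun t => (-deriv Φ (γ y t), -deriv (deriv Φ) (γ y t)))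
      (fun t ht => (hd t ht.1).continuousAt.continuousWithinAt)
      (fun t ht => (hd t ht.1).hasDerivWithinAt)
      (hδ y hy)
      (by
        intro t ht
        have hn : ‖deriv Φ (γ y t)‖ ≤ ‖(Φ (γ y t), deriv Φ (γ y t))‖ :=
          norm_snd_le (Φ (γ y t), deriv Φ (γ y t))
        have hs := hsec (γ y t) (by simp [hγ]; exact ht.1)
        rw [add_zero, norm_prod_le_iff]
        simp only [norm_neg]
        constructor
        · nlinarith [norm_nonneg (deriv Φ (γ y t))]
        · exact hs.trans (by gcongr)) T ⟨hT, le_rfl⟩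
    rw [gronwallBound_ε0, sub_zero] at this
    exact (norm_fst_le (Φ (γ y T), deriv Φ (γ y T))).trans this
  obtain ⟨N, hN⟩ := exists_nat_ge C
  have hN1 : (1:ℝ) ≤ N := hC1.trans hN
  refine ⟨N, δ + ‖a‖ * (1 + Real.pi), fun z hz0 hz => ?_⟩
  have hzp : 0 < ‖z‖ := norm_pos_iff.2 hz0
  have hlog : Real.log ‖z‖ < -3 := by
    rw [Real.log_lt_iff_lt_exp hzp]; exact hz
  have hz1 : ‖z‖ ≤ 1 := hz.le.trans (Real.exp_le_one_iff.2 (by norm_num))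
  set T := -3 - Real.log ‖z‖ with hT
  have hlz : γ z.arg T = Complex.log z := by
    apply Complex.ext <;> simp [hγ, hT, log_re, log_im]
  have h1 := hgr z.arg ⟨(neg_pi_lt_arg z).le, arg_le_pi z⟩ T (by linarith)
  rw [hlz] at h1
  have hgz : g z = Φ (Complex.log z) - a * Complex.log z := by
    simp only [hΦ]; rw [exp_log hz0]; ring
  have h2 : ‖z‖ ^ N * ‖Φ (Complex.log z)‖ ≤ δ := by
    have e : ‖z‖ ^ N = Real.exp (N * Real.log ‖z‖) := by
      rw [Real.exp_nat_mul, Real.exp_log hzp]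
    calc ‖z‖ ^ N * ‖Φ (Complex.log z)‖ ≤ ‖z‖ ^ N * (δ * Real.exp (C * T)) := by gcongr
      _ = δ * Real.exp (N * Real.log ‖z‖ + C * T) := by rw [e, Real.exp_add]; ring
      _ ≤ δ * 1 := by
        gcongr
        rw [Real.exp_le_one_iff]
        rw [hT]
        nlinarith
      _ = δ := mul_one _
  have h3 : ‖z‖ ^ N * ‖Complex.log z‖ ≤ 1 + Real.pi := by
    have e1 : ‖z‖ ^ N ≤ ‖z‖ := pow_le_of_le_one hzp.le hz1 (by rintro rfl; norm_num at hN1)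
    have e2 : ‖Complex.log z‖ ≤ -Real.log ‖z‖ + Real.pi := by
      refine (norm_le_abs_re_add_abs_im _).trans ?_
      rw [log_re, log_im, abs_of_neg (by linarith)]
      gcongr
      exact abs_arg_le_pi z
    have e3 : -Real.log ‖z‖ ≤ ‖z‖⁻¹ := by
      rw [← Real.log_inv]
      exact (Real.log_le_sub_one_of_pos (inv_pos.2 hzp)).trans (by linarith)
    calc ‖z‖ ^ N * ‖Complex.log z‖ ≤ ‖z‖ * (‖z‖⁻¹ + Real.pi) := by gcongr; linarith
      _ = 1 + ‖z‖ * Real.pi := by field_simp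
      _ ≤ 1 + Real.pi := by nlinarith
  rw [hgz, mul_sub]
  refine (norm_sub_le _ _).trans ?_
  rw [norm_mul, norm_mul, norm_mul, norm_pow]
  have : ‖z‖ ^ N * (‖a‖ * ‖Complex.log z‖) = ‖a‖ * (‖z‖ ^ N * ‖Complex.log z‖) := by ring
  rw [this]
  gcongr

lemma merom (g : ℂ → ℂ) 
    (hg : DifferentiableOn ℂ g (ball (0 : ℂ) 1 \ {0}))
    (h : ∃ (N : ℕ) (D : ℝ), ∀ z : ℂ, z ≠ 0 → ‖z‖ < Real.exp (-3) → ‖z ^ N * g z‖ ≤ D) :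
    MeromorphicAt g 0 := by
  obtain ⟨N, D, h⟩ := h
  refine ⟨N + 1, ?_⟩
  simp only [sub_zero, smul_eq_mul]
  apply Complex.analyticAt_of_differentiable_on_punctured_nhds_of_continuousAt
  · have ho : IsOpen (ball (0 : ℂ) 1 \ {0}) := isOpen_ball.sdiff isClosed_singleton
    have : ball (0 : ℂ) 1 \ {0} ∈ 𝓝[≠] (0:ℂ) :=
      inter_mem (nhdsWithin_le_nhds (ball_mem_nhds _ one_pos)) self_mem_nhdsWithin
    filter_upwards [this] with z hz
    exact (by fun_prop : DifferentiableAt ℂ (fun z : ℂ => z ^ (N + 1)) z).mul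
      (hg.differentiableAt (ho.mem_nhds hz))
  · rw [ContinuousAt, zero_pow (Nat.succ_ne_zero N), zero_mul]
    apply squeeze_zero_norm' (a := fun z : ℂ => ‖z‖ * D)
    · filter_upwards [ball_mem_nhds (0:ℂ) (Real.exp_pos (-3))] with z hz
      rcases eq_or_ne z 0 with rfl | hz0
      · simp
      · rw [pow_succ', mul_assoc, norm_mul]
        gcongr
        exact h z hz0 (by simpa using hz)
    · have : Tendsto (fun z : ℂ => ‖z‖ * D) (𝓝 0) (𝓝 (‖(0:ℂ)‖ * D)) :=
        (by fun_prop : Continuous fun z : ℂ => ‖z‖ * D).tendsto 0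
      simpa using this

lemma final_lim (g : ℂ → ℂ) (a : ℂ) (hg : MeromorphicAt g 0) (θ : ℝ) (L : ℂ → ℂ)
    (hL : DifferentiableOn ℂ L (ball (0 : ℂ) 1 \ lray θ))
    (hexp : ∀ z ∈ ball (0 : ℂ) 1 \ lray θ, Complex.exp (L z) = z) :
    ∃ p : OnePoint ℂ,
        Tendsto (fun z => ((g z + a * L z : ℂ) : OnePoint ℂ))
          (𝓝[ball (0 : ℂ) 1 \ lray θ] 0) (𝓝 p) := by
  have hpi := Real.pi_pos
  set U := ball (0 : ℂ) 1 \ lray θ with hU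
  have hU0 : ∀ z ∈ U, z ≠ 0 := by
    rintro z hz rfl
    exact hz.2 ⟨0, le_rfl, by simp⟩
  have hle : 𝓝[U] (0:ℂ) ≤ 𝓝[≠] 0 := nhdsWithin_mono _ hU0
  have hnorm : Tendsto (fun z : ℂ => ‖z‖) (𝓝[U] 0) (𝓝[>] 0) := by
    refine tendsto_nhdsWithin_iff.2 ⟨?_, ?_⟩
    · simpa using (continuous_norm.tendsto (0:ℂ)).mono_left nhdsWithin_le_nhds
    · filter_upwards [self_mem_nhdsWithin] with z hz
      exact norm_pos_iff.2 (hU0 z hz)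
  have hre : ∀ z ∈ U, (L z).re = Real.log ‖z‖ := by
    intro z hz
    rw [← congrArg norm (hexp z hz), norm_exp, Real.log_exp]
  suffices hcase : (∃ y, Tendsto (fun z => g z + a * L z) (𝓝[U] 0) (𝓝 y)) ∨
      Tendsto (fun z => ‖g z + a * L z‖) (𝓝[U] 0) atTop by
    rcases hcase with ⟨y, hy⟩ | h
    · exact ⟨(y : OnePoint ℂ), (OnePoint.continuous_coe.tendsto y).comp hy⟩
    · refine ⟨OnePoint.infty, OnePoint.tendsto_coe_infty.comp ?_⟩
      rw [coclosedCompact_eq_cocompact, ← Metric.cobounded_eq_cocompact]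
      exact tendsto_norm_atTop_iff_cobounded.1 h
  rcases le_or_gt 0 (meromorphicOrderAt g 0) with ho | ho
  · obtain ⟨y, hy⟩ := tendsto_nhds_of_meromorphicOrderAt_nonneg hg ho
    have hy' := hy.mono_left hle
    rcases eq_or_ne a 0 with rfl | ha
    · left; exact ⟨y, by simpa using hy'⟩
    · right
      have hLinf : Tendsto (fun z => ‖a * L z‖) (𝓝[U] 0) atTop := by
        have h1 : Tendsto (fun z : ℂ => -Real.log ‖z‖) (𝓝[U] 0) atTop :=
          tendsto_neg_atBot_atTop.comp (Real.tendsto_log_nhdsGT_zero.comp hnorm)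
        refine tendsto_atTop_mono' _ ?_ (h1.const_mul_atTop (norm_pos_iff.2 ha))
        filter_upwards [self_mem_nhdsWithin] with z hz
        rw [norm_mul]
        gcongr
        rw [← hre z hz]
        exact (neg_le_abs _).trans (abs_re_le_norm _)
      have h2 := tendsto_atTop_add_right_of_le' _ (-(‖y‖ + 1)) hLinf
        (g := fun z => -‖g z‖) (by
          filter_upwards [hy'.norm.eventually (gt_mem_nhds (lt_add_one ‖y‖))] with z hz
          linarith)
      refine tendsto_atTop_mono (fun z => ?_) h2
      have := norm_sub_le (g z + a * L z) (g z)
      rw [add_sub_cancel_left] at this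
      linarith
  · right
    obtain ⟨k, hk⟩ := strip_log hL hexp
    -- z * L z → 0
    have hzL : Tendsto (fun z => ‖z * (a * L z)‖) (𝓝[U] 0) (𝓝 0) := by
      set B := |θ| + 2 * Real.pi + ‖k‖ with hB
      have hb : ∀ᶠ z in 𝓝[U] (0:ℂ), ‖z * (a * L z)‖ ≤ ‖a‖ * (|Real.log ‖z‖ * ‖z‖| + ‖z‖ * B) := by
        filter_upwards [self_mem_nhdsWithin] with z hz
        obtain ⟨ζ, he, h0, h1, h2⟩ := exists_strip hz
        have h3 := hk ζ h0 h1 h2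
        rw [he] at h3
        have him : |(L z).im| ≤ B := by
          rw [h3, add_im]
          have := abs_im_le_norm k
          have e1 : |ζ.im| ≤ |θ| + 2 * Real.pi := by
            rw [abs_le]
            have := neg_abs_le θ
            have := le_abs_self θ
            constructor <;> linarith
          exact (abs_add_le _ _).trans (by linarith)
        have hn : ‖L z‖ ≤ |Real.log ‖z‖| + B := by
          refine (norm_le_abs_re_add_abs_im _).trans ?_
          rw [hre z hz]; linarith
        rw [norm_mul, norm_mul, abs_mul, abs_norm]
        calc ‖z‖ * (‖a‖ * ‖L z‖) ≤ ‖z‖ * (‖a‖ * (|Real.log ‖z‖| + B)) := by gcongr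
          _ = _ := by ring
      refine squeeze_zero' (Eventually.of_forall fun _ => norm_nonneg _) hb ?_
      have t1 : Tendsto (fun z : ℂ => Real.log ‖z‖ * ‖z‖) (𝓝[U] 0) (𝓝 0) := by
        have := (tendsto_log_mul_rpow_nhdsGT_zero (r := 1) one_pos).comp hnorm
        simpa [Function.comp_def] using this
      have t2 : Tendsto (fun z : ℂ => ‖z‖) (𝓝[U] 0) (𝓝 0) := hnorm.mono_right nhdsWithin_le_nhds
      simpa using (t1.abs.add (t2.mul_const B)).const_mul ‖a‖
    obtain ⟨n, hn⟩ := WithTop.ne_top_iff_exists.1 ho.ne_top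
    obtain ⟨G, hG, hG0, hGe⟩ := (meromorphicOrderAt_eq_int_iff hg).1 hn.symm
    have hn0 : n < 0 := by
      rw [← hn] at ho; exact_mod_cast ho
    set ε := ‖G 0‖ / 2 with hε
    have hGp : 0 < ‖G 0‖ := norm_pos_iff.2 hG0
    have hε0 : 0 < ε := by positivity
    have hlow : ∀ᶠ z in 𝓝[U] (0:ℂ), ε ≤ ‖z * g z‖ := by
      have e1 : ∀ᶠ z in 𝓝[U] (0:ℂ), ε < ‖G z‖ :=
        (hG.continuousAt.norm.tendsto.mono_left nhdsWithin_le_nhds).eventually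
          (lt_mem_nhds (by rw [hε]; linarith))
      filter_upwards [e1, hle hGe, self_mem_nhdsWithin] with z h1 h2 h3
      have hz1 : ‖z‖ < 1 := by simpa using h3.1
      have hz0 := hU0 z h3
      simp only [sub_zero, smul_eq_mul] at h2
      have h2' : g z = z ^ n * G z := h2
      rw [h2', ← mul_assoc, norm_mul]
      have e2 : 1 ≤ ‖z * z ^ n‖ := by
        rw [← zpow_one_add₀ hz0, norm_zpow]
        exact one_le_zpow_of_nonpos₀ (norm_pos_iff.2 hz0) hz1.le (by omega)
      nlinarith [norm_nonneg (G z)]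
    have hinv : Tendsto (fun z : ℂ => (ε / 2) * ‖z‖⁻¹) (𝓝[U] 0) atTop :=
      (tendsto_inv_nhdsGT_zero.comp hnorm).const_mul_atTop (by positivity)
    refine tendsto_atTop_mono' _ ?_ hinv
    filter_upwards [hlow, hzL.eventually (gt_mem_nhds (half_pos hε0)), self_mem_nhdsWithin]
      with z h1 h2 h3
    have hzp := norm_pos_iff.2 (hU0 z h3)
    rw [← div_eq_mul_inv, div_le_iff₀ hzp, mul_comm, ← norm_mul, mul_add]
    have := norm_sub_le (z * g z + z * (a * L z)) (z * (a * L z))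
    rw [add_sub_cancel_right] at this
    linarith

/-- under the injectivity assumption on all branches
`φ_θ = g + (c/2πi)·L_θ` on `𝔻 ∖ l^θ`, every such branch has a limit in the
Riemann sphere `ℂ ∪ {∞}` (the one-point compactification of `ℂ`) as `z → 0`
within `𝔻 ∖ l^θ`. -/
theorem limit_exists_of_injective_branches
    (g : ℂ → ℂ) (c : ℂ)
    (hg : DifferentiableOn ℂ g (ball (0 : ℂ) 1 \ {0}))
    (hyp : ∀ θ : ℝ, ∃ L : ℂ → ℂ,
      DifferentiableOn ℂ L (ball (0 : ℂ) 1 \ lray θ) ∧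
      (∀ z ∈ ball (0 : ℂ) 1 \ lray θ, Complex.exp (L z) = z) ∧
      InjOn (fun z => g z + c / (2 * (Real.pi : ℂ) * Complex.I) * L z)
        (ball (0 : ℂ) 1 \ lray θ)) :
    ∀ θ : ℝ, ∀ L : ℂ → ℂ,
      DifferentiableOn ℂ L (ball (0 : ℂ) 1 \ lray θ) →
      (∀ z ∈ ball (0 : ℂ) 1 \ lray θ, Complex.exp (L z) = z) →
      InjOn (fun z => g z + c / (2 * (Real.pi : ℂ) * Complex.I) * L z)
        (ball (0 : ℂ) 1 \ lray θ) →
      ∃ p : OnePoint ℂ,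
        Tendsto
          (fun z => ((g z + c / (2 * (Real.pi : ℂ) * Complex.I) * L z : ℂ) :
            OnePoint ℂ))
          (𝓝[ball (0 : ℂ) 1 \ lray θ] 0) (𝓝 p) := by
  intro θ L hL hexp _
  exact final_lim g _ (merom g hg (growth g _ hg hyp)) θ L hL hexp
end

section
/- Let g be a holomorphic function on the punctured unit disc 𝔻* and let c ∈ ℂ with c ≠ 0. Assume that for every θ ∈ ℝ there exists a branch L_θ of the logarithm on 𝔻 ∖ l^θ such that the map φ_θ(z) = g(z) + (c/(2πi))·L_θ(z) is injective on 𝔻 ∖ l^θ. Then for every such θ and branch L_θ, the derivative φ_θ′ is nonvanishing on 𝔻 ∖ l^θ, and the Schwarzian derivative S(φ_θ), defined and holomorphic on 𝔻 ∖ l^θ, extends to a holomorphic function ξ on all of 𝔻* which has at worst a pole at 0: there exists n ∈ ℕ such that z ↦ z^n·ξ(z) extends holomorphically across 0. -/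
open Complex Metric Set Filter Topology

/-- The Schwarzian derivative `S(f) = (f''/f')' - (1/2)·(f''/f')²`. -/
noncomputable def schwarzian (f : ℂ → ℂ) (z : ℂ) : ℂ :=
  deriv (fun w => deriv (deriv f) w / deriv f w) z
    - (1 / 2) * (deriv (deriv f) z / deriv f z) ^ 2

lemma aux_nonconst {f : ℂ → ℂ} {U : Set ℂ} (hU : IsOpen U) (hi : InjOn f U) {z : ℂ} (hz : z ∈ U) :
    ¬ ∀ᶠ w in 𝓝 z, f w = f z := by
  intro h
  have h2 : ∀ᶠ w in 𝓝[≠] z, w = z := by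
    have := h.and (hU.mem_nhds hz)
    filter_upwards [nhdsWithin_le_nhds this] with w hw
    exact hi hw.2 hz hw.1
  have h3 : ∀ᶠ w in 𝓝[≠] z, False := by
    filter_upwards [h2, self_mem_nhdsWithin] with w hw hw2
    exact hw2 hw
  exact h3.exists.elim fun _ h => h

lemma aux_nhds {f : ℂ → ℂ} {U : Set ℂ} (hU : IsOpen U) (hf : DifferentiableOn ℂ f U)
    (hi : InjOn f U) {z : ℂ} (hz : z ∈ U) : 𝓝 (f z) ≤ map f (𝓝 z) :=
  (hf.analyticAt (hU.mem_nhds hz)).eventually_constant_or_nhds_le_map_nhds.resolve_left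
    (aux_nonconst hU hi hz)

lemma aux_cont {f : ℂ → ℂ} {U : Set ℂ} (hU : IsOpen U) (hf : DifferentiableOn ℂ f U)
    (hi : InjOn f U) {z : ℂ} (hz : z ∈ U) : ContinuousAt (Function.invFunOn f U) (f z) := by
  have hG : ∀ w ∈ U, Function.invFunOn f U (f w) = w := fun w hw => hi.leftInvOn_invFunOn hw
  intro N hN
  rw [hG z hz] at hN
  refine aux_nhds hU hf hi hz ?_
  rw [mem_map]
  filter_upwards [hN, hU.mem_nhds hz] with w hw hwU
  simpa [hG w hwU] using hw

lemma aux_inv {f : ℂ → ℂ} {U : Set ℂ} (hU : IsOpen U) (hf : DifferentiableOn ℂ f U)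
    (hi : InjOn f U) {z : ℂ} (hz : z ∈ U) :
    deriv f z ≠ 0 ∧ HasDerivAt (Function.invFunOn f U) (deriv f z)⁻¹ (f z) := by
  set G := Function.invFunOn f U with hGdef
  have hG : ∀ w ∈ U, G (f w) = w := fun w hw => hi.leftInvOn_invFunOn hw
  have hfG : ∀ w ∈ U, ∀ᶠ y in 𝓝 (f w), f (G y) = y := by
    intro w hw
    refine aux_nhds hU hf hi hw ?_
    rw [mem_map]
    filter_upwards [hU.mem_nhds hw] with v hv
    simp [hG v hv]
  have key : ∀ w ∈ U, deriv f w ≠ 0 → HasDerivAt G (deriv f w)⁻¹ (f w) := by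
    intro w hw hne
    refine HasDerivAt.of_local_left_inverse (aux_cont hU hf hi hw) ?_ hne (hfG w hw)
    rw [hG w hw]
    exact (hf.differentiableAt (hU.mem_nhds hw)).hasDerivAt
  suffices deriv f z ≠ 0 from ⟨this, key z hz this⟩
  have hd : AnalyticAt ℂ (deriv f) z := (hf.analyticAt (hU.mem_nhds hz)).deriv
  have hnear : ∀ᶠ w in 𝓝[≠] z, deriv f w ≠ 0 := by
    refine hd.eventually_eq_zero_or_eventually_ne_zero.resolve_left ?_
    intro h0
    obtain ⟨r, hr, hball⟩ := Metric.mem_nhds_iff.1 (h0.and (hU.mem_nhds hz))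
    refine aux_nonconst hU hi hz ?_
    filter_upwards [ball_mem_nhds z hr] with w hw
    exact isOpen_ball.is_const_of_deriv_eq_zero (convex_ball z r).isPreconnected
      (hf.mono fun v hv => (hball hv).2) (fun v hv => (hball hv).1) hw (mem_ball_self hr)
  have hGd : DifferentiableAt ℂ G (f z) := by
    refine (Complex.analyticAt_of_differentiable_on_punctured_nhds_of_continuousAt ?_
      (aux_cont hU hf hi hz)).differentiableAt
    have h1 : ∀ᶠ y in 𝓝 (f z), y ≠ f z → DifferentiableAt ℂ G y := by
      refine aux_nhds hU hf hi hz ?_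
      rw [mem_map]
      filter_upwards [hU.mem_nhds hz, eventually_nhdsWithin_iff.1 hnear] with w hw hw2
      intro hne
      exact (key w hw (hw2 (by rintro rfl; exact hne rfl))).differentiableAt
    exact eventually_nhdsWithin_iff.2 h1
  intro h0
  have hfd : HasDerivAt f 0 (G (f z)) := by
    rw [hG z hz, ← h0]
    exact (hf.differentiableAt (hU.mem_nhds hz)).hasDerivAt
  have h1 := hfd.comp (f z) hGd.hasDerivAt
  have h2 : HasDerivAt (f ∘ G) 1 (f z) :=
    (hasDerivAt_id (f z)).congr_of_eventuallyEq (hfG z hz)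
  have := h1.unique h2
  simp at this

lemma aux_bloch {f : ℂ → ℂ} {z₀ : ℂ} {R : ℝ} (hR : 0 < R) (hf : DifferentiableOn ℂ f (ball z₀ R))
    (h0 : deriv f z₀ ≠ 0) :
    ∃ w, ball w (R * ‖deriv f z₀‖ / 96) ⊆ f '' ball z₀ R := by
  have hf' : DifferentiableOn ℂ (deriv f) (ball z₀ R) := hf.deriv isOpen_ball
  set r := R / 2 with hr
  have hsub : closedBall z₀ r ⊆ ball z₀ R := closedBall_subset_ball (by linarith)
  have hcont : ContinuousOn (fun z => (r - dist z z₀) * ‖deriv f z‖) (closedBall z₀ r) :=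
    (by fun_prop : ContinuousOn (fun z => r - dist z z₀) (closedBall z₀ r)).mul
      (hf'.continuousOn.mono hsub).norm
  have hr0 : 0 < r := by positivity
  obtain ⟨a, ha, hmax⟩ := (isCompact_closedBall z₀ r).exists_isMaxOn
    ⟨z₀, mem_closedBall_self hr0.le⟩ hcont
  have hmax' : ∀ z ∈ closedBall z₀ r, (r - dist z z₀) * ‖deriv f z‖ ≤
    (r - dist a z₀) * ‖deriv f a‖ := fun z hz => hmax hz
  have hM := hmax' z₀ (mem_closedBall_self hr0.le)
  simp only [dist_self, sub_zero] at hM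
  have h0' : 0 < ‖deriv f z₀‖ := norm_pos_iff.2 h0
  set t := r - dist a z₀ with ht
  have ht0 : 0 < t := by
    by_contra hcon
    have : t * ‖deriv f a‖ ≤ 0 := mul_nonpos_of_nonpos_of_nonneg (not_lt.1 hcon) (norm_nonneg _)
    have : 0 < r * ‖deriv f z₀‖ := by positivity
    linarith
  set A := ‖deriv f a‖ with hA
  have hA0 : 0 < A := by
    have : 0 < r * ‖deriv f z₀‖ := by positivity
    by_contra hcon
    have : t * A ≤ 0 := mul_nonpos_of_nonneg_of_nonpos ht0.le (not_lt.1 hcon)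
    linarith
  have hsub2 : ball a (t/2) ⊆ closedBall z₀ r := by
    intro z hz
    rw [mem_closedBall]; rw [mem_ball] at hz
    have := dist_triangle z a z₀
    linarith
  have hbd : ∀ z ∈ ball a (t/2), ‖deriv f z‖ ≤ 2 * A := by
    intro z hz
    have h1 := hmax' z (hsub2 hz)
    rw [mem_ball] at hz
    have h2 : t / 2 ≤ r - dist z z₀ := by
      have := dist_triangle z a z₀
      linarith
    have h3 := mul_le_mul_of_nonneg_right h2 (norm_nonneg (deriv f z))
    by_contra hcon
    push Not at hcon
    nlinarith
  have hschw : ∀ z ∈ ball a (t/2), dist (deriv f z) (deriv f a) ≤ (3 * A) / (t/2) * dist z a := by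
    intro z hz
    refine dist_le_div_mul_dist_of_mapsTo_ball (hf'.mono (hsub2.trans hsub)) ?_ hz
    intro w hw
    rw [mem_closedBall, dist_eq_norm]
    have := norm_sub_le (deriv f w) (deriv f a)
    have := hbd w hw
    linarith
  set s := t / 12 with hs
  have hs0 : 0 < s := by positivity
  have hsub3 : closedBall a s ⊆ ball a (t/2) := closedBall_subset_ball (by linarith)
  have hsph : ∀ z ∈ sphere a s, s * A / 2 ≤ ‖f z - f a‖ := by
    intro z hz
    have hmv := (convex_closedBall a s).norm_image_sub_le_of_norm_hasDerivWithin_le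
      (f := fun z => f z - deriv f a * z) (f' := fun z => deriv f z - deriv f a) (C := A / 2)
      (x := a) (y := z) ?_ ?_ (mem_closedBall_self hs0.le) (sphere_subset_closedBall hz)
    · have hzn : ‖z - a‖ = s := by simpa [dist_eq_norm] using hz
      rw [hzn] at hmv
      have h4 : ‖deriv f a * (z - a)‖ = A * s := by rw [norm_mul, hzn]
      have h5 : deriv f a * (z - a) = (f z - f a) -
        ((f z - deriv f a * z) - (f a - deriv f a * a)) := by ring
      have h6 := norm_sub_le (f z - f a) ((f z - deriv f a * z) - (f a - deriv f a * a))
      rw [← h5, h4] at h6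
      linarith
    · intro w hw
      have hwd : DifferentiableAt ℂ f w :=
        hf.differentiableAt (isOpen_ball.mem_nhds (hsub (hsub2 (hsub3 hw))))
      have := hwd.hasDerivAt.sub ((hasDerivAt_id w).const_mul (deriv f a))
      simp only [mul_one] at this
      exact this.hasDerivWithinAt
    · intro w hw
      have h7 := hschw w (hsub3 hw)
      rw [dist_eq_norm] at h7
      refine h7.trans ?_
      rw [mem_closedBall] at hw
      calc 3 * A / (t/2) * dist w a ≤ 3 * A / (t/2) * s := by gcongr
        _ = A / 2 := by rw [hs]; field_simp; norm_num
  have hda : DifferentiableAt ℂ f a :=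
    hf.differentiableAt (isOpen_ball.mem_nhds (hsub ha))
  have hfin := DiffContOnCl.ball_subset_image_closedBall (f := f) (z₀ := a) (r := s)
    (ε := s * A / 2) ?_ hs0 hsph (hda.hasDerivAt.eventually_ne (norm_pos_iff.1 hA0)
      |>.frequently.filter_mono nhdsWithin_le_nhds)
  · refine ⟨f a, (ball_subset_ball ?_).trans (hfin.trans
      (image_mono (hsub3.trans (hsub2.trans hsub))))⟩
    have : s * A / 2 / 2 = t * A / 48 := by rw [hs]; ring
    rw [this]
    have : R = 2 * r := by rw [hr]; ring
    rw [this]; linarith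
  · refine DifferentiableOn.diffContOnCl ?_
    rw [closure_ball a hs0.ne']
    exact hf.mono (hsub3.trans (hsub2.trans hsub))

lemma aux_log {f : ℂ → ℂ} {z₀ : ℂ} {R : ℝ} (hR : 0 < R) (hf : DifferentiableOn ℂ f (ball z₀ R))
    (hne : ∀ z ∈ ball z₀ R, f z ≠ 0) :
    ∃ l : ℂ → ℂ, (∀ z ∈ ball z₀ R, HasDerivAt l (deriv f z / f z) z) ∧
      ∀ z ∈ ball z₀ R, Complex.exp (l z) = f z := by
  have hq : DifferentiableOn ℂ (fun z => deriv f z / f z) (ball z₀ R) :=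
    (hf.deriv isOpen_ball).div hf hne
  obtain ⟨l, hl0, hl⟩ := hq.isExactOn_ball.with_val_at z₀ (Complex.log (f z₀))
  refine ⟨l, hl, fun z hz => ?_⟩
  have hd : ∀ w ∈ ball z₀ R, HasDerivAt (fun z => f z * Complex.exp (-l z)) 0 w := by
    intro w hw
    have h1 := (hf.differentiableAt (isOpen_ball.mem_nhds hw)).hasDerivAt.mul (hl w hw).neg.cexp
    convert! h1 using 1
    have := hne w hw
    field_simp
    ring
  have hconst := isOpen_ball.is_const_of_deriv_eq_zero (convex_ball z₀ R).isPreconnected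
    (fun w hw => (hd w hw).differentiableAt.differentiableWithinAt) (fun w hw => (hd w hw).deriv)
    hz (mem_ball_self hR)
  have h0 := hne z₀ (mem_ball_self hR)
  simp only [hl0, Complex.exp_neg, Complex.exp_log h0, mul_inv_cancel₀ h0] at hconst
  have := Complex.exp_ne_zero (l z)
  field_simp at hconst
  exact hconst.symm

lemma aux_koebe {f : ℂ → ℂ} {z₀ : ℂ} {R : ℝ} (hR : 0 < R) (hf : DifferentiableOn ℂ f (ball z₀ R))
    (hi : InjOn f (ball z₀ R)) :
    ball (f z₀) (R * ‖deriv f z₀‖ / 400) ⊆ f '' ball z₀ R := by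
  intro v hv
  by_contra hcon
  have hz0 := mem_ball_self hR (x := z₀)
  have hne : ∀ z ∈ ball z₀ R, f z - v ≠ 0 := fun z hz h => hcon ⟨z, hz, sub_eq_zero.1 h⟩
  obtain ⟨l, hl, hexp⟩ := aux_log hR (hf.sub_const v) hne
  have hder : deriv l z₀ = deriv f z₀ / (f z₀ - v) := by
    rw [(hl z₀ hz0).deriv]; simp
  have hd0 := (aux_inv isOpen_ball hf hi hz0).1
  obtain ⟨w, hw⟩ := aux_bloch hR
    (fun z hz => (hl z hz).differentiableAt.differentiableWithinAt)
    (by rw [hder]; exact div_ne_zero hd0 (hne z₀ hz0))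
  have hrad : 4 < R * ‖deriv l z₀‖ / 96 := by
    rw [hder, norm_div]
    rw [mem_ball, dist_comm, dist_eq_norm] at hv
    have : 0 < ‖f z₀ - v‖ := norm_pos_iff.2 (hne z₀ hz0)
    rw [lt_div_iff₀ (by norm_num), ← mul_div_assoc, lt_div_iff₀ this]
    linarith
  have hpi := Real.pi_lt_four
  have hpi0 := Real.pi_pos
  obtain ⟨z1, hz1, h1⟩ := hw (show w + Real.pi * I ∈ _ by
    rw [mem_ball, dist_eq_norm]
    simp [abs_of_pos hpi0]; linarith)
  obtain ⟨z2, hz2, h2⟩ := hw (show w - Real.pi * I ∈ _ by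
    rw [mem_ball, dist_eq_norm]
    simp [abs_of_pos hpi0]; linarith)
  have he : Complex.exp (l z1) = Complex.exp (l z2) := by
    rw [h1, h2, Complex.exp_eq_exp_iff_exists_int]
    exact ⟨1, by push_cast; ring⟩
  rw [hexp z1 hz1, hexp z2 hz2] at he
  have := hi hz1 hz2 (by simpa using he)
  rw [this, h2] at h1
  have h3 : (Real.pi : ℂ) * I = 0 := by linear_combination (-1/2 : ℂ) * h1
  simp [hpi0.ne'] at h3

lemma aux_second {f : ℂ → ℂ} {z₀ : ℂ} {R : ℝ} (hR : 0 < R) (hf : DifferentiableOn ℂ f (ball z₀ R))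
    (hi : InjOn f (ball z₀ R)) :
    ‖deriv (deriv f) z₀ / deriv f z₀‖ ≤ 1280000 / R := by
  have hz0 := mem_ball_self hR (x := z₀)
  set U := ball z₀ R with hU
  have hUo : IsOpen U := isOpen_ball
  have hd0 := (aux_inv hUo hf hi hz0).1
  have hdp : 0 < ‖deriv f z₀‖ := norm_pos_iff.2 hd0
  set ρ := R * ‖deriv f z₀‖ / 400 with hρ
  have hρ0 : 0 < ρ := by positivity
  have hk : ball (f z₀) ρ ⊆ f '' U := aux_koebe hR hf hi
  set G := Function.invFunOn f U with hGdef
  have hG : ∀ w ∈ U, G (f w) = w := fun w hw => hi.leftInvOn_invFunOn hw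
  have hGd : ∀ y ∈ ball (f z₀) ρ, G y ∈ U ∧ HasDerivAt G (deriv f (G y))⁻¹ y := by
    intro y hy
    obtain ⟨z, hz, rfl⟩ := hk hy
    rw [hG z hz]
    exact ⟨hz, (aux_inv hUo hf hi hz).2⟩
  have hyc := mem_ball_self hρ0 (x := f z₀)
  have hG2 : deriv (deriv G) (f z₀) = - deriv (deriv f) z₀ / (deriv f z₀)^3 := by
    have hev : deriv G =ᶠ[𝓝 (f z₀)] fun y => (deriv f (G y))⁻¹ := by
      filter_upwards [isOpen_ball.mem_nhds hyc] with y hy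
      exact (hGd y hy).2.deriv
    rw [hev.deriv_eq]
    have h1 : HasDerivAt (deriv f) (deriv (deriv f) z₀) (G (f z₀)) := by
      rw [hG z₀ hz0]
      exact ((hf.deriv hUo).differentiableAt (hUo.mem_nhds hz0)).hasDerivAt
    have h2 := (h1.comp (f z₀) (hGd _ hyc).2).inv (by simpa [hG z₀ hz0] using hd0)
    have h3 := h2.deriv
    simp only [Function.comp_def, hG z₀ hz0] at h3
    have h4 : (fun y => (deriv f (G y))⁻¹) = (fun x => deriv f (G x))⁻¹ := rfl
    rw [h4, h3]
    field_simp
  have hC := Complex.norm_iteratedDeriv_le_of_forall_mem_sphere_norm_le (f := fun y => G y - z₀)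
    (c := f z₀) (R := ρ / 2) (C := R) 2 (by positivity) ?_ ?_
  · rw [iteratedDeriv_succ, iteratedDeriv_one] at hC
    have h5 : deriv (fun y => G y - z₀) = deriv G := by
      ext y; simp
    rw [h5, hG2, norm_div, norm_neg, norm_pow] at hC
    rw [norm_div]
    set a := ‖deriv f z₀‖
    set b := ‖deriv (deriv f) z₀‖
    rw [hρ] at hC
    simp only [Nat.factorial] at hC
    push_cast at hC
    rw [div_le_div_iff₀ (by positivity) (by positivity)] at hC
    rw [div_le_div_iff₀ (by positivity) (by positivity)]
    have h6 : 0 < R * a^2 := by positivity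
    refine le_of_mul_le_mul_right ?_ h6
    nlinarith [hC]
  · refine DifferentiableOn.diffContOnCl ?_
    rw [closure_ball _ (by positivity)]
    intro y hy
    exact ((hGd y (closedBall_subset_ball (by linarith) hy)).2.differentiableAt.sub_const
      z₀).differentiableWithinAt
  · intro y hy
    have := (hGd y (closedBall_subset_ball (by linarith) (sphere_subset_closedBall hy))).1
    rw [hU, mem_ball, dist_eq_norm] at this
    exact this.le

lemma lray_closed (θ : ℝ) : IsClosed (lray θ) := by
  have : lray θ = {z : ℂ | (z * Complex.exp (-(θ * I))).im = 0 ∧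
      0 ≤ (z * Complex.exp (-(θ * I))).re} := by
    ext z
    constructor
    · rintro ⟨t, ht, rfl⟩
      have : (t : ℂ) * Complex.exp (θ * I) * Complex.exp (-(θ * I)) = t := by
        rw [mul_assoc, ← Complex.exp_add]; simp
      simp only [mem_ofPred_eq, this]
      simpa using ht
    · rintro ⟨h1, h2⟩
      refine ⟨_, h2, ?_⟩
      have h3 : ((z * Complex.exp (-(θ * I))).re : ℂ) = z * Complex.exp (-(θ * I)) := by
        apply Complex.ext <;> simp only [ofReal_re, ofReal_im, h1]
      rw [h3, mul_assoc, ← Complex.exp_add]; simp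
  rw [this]
  have hc : Continuous fun z : ℂ => z * Complex.exp (-(θ * I)) := by fun_prop
  exact (isClosed_eq (Complex.continuous_im.comp hc) continuous_const).inter
    (isClosed_le continuous_const (Complex.continuous_re.comp hc))

lemma zero_mem_lray (θ : ℝ) : (0 : ℂ) ∈ lray θ := ⟨0, le_rfl, by simp⟩

lemma ball_disjoint_lray {z w : ℂ} (hw : w ∈ ball z ‖z‖) :
    w ∉ lray (Complex.arg z + Real.pi) := by
  rintro ⟨t, ht, rfl⟩
  rw [mem_ball, dist_comm, dist_eq_norm] at hw
  have h1 : z - (t : ℂ) * Complex.exp ((Complex.arg z + Real.pi : ℝ) * I) =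
      ((‖z‖ + t : ℝ) : ℂ) * Complex.exp (Complex.arg z * I) := by
    have h2 := Complex.norm_mul_exp_arg_mul_I z
    push_cast
    rw [add_mul, Complex.exp_add, Complex.exp_pi_mul_I]
    linear_combination -h2
  rw [h1, norm_mul, Complex.norm_exp_ofReal_mul_I, mul_one, Complex.norm_real,
    Real.norm_of_nonneg (by positivity)] at hw
  linarith

lemma aux_derivL {L : ℂ → ℂ} {U : Set ℂ} (hU : IsOpen U) (hL : DifferentiableOn ℂ L U)
    (he : ∀ z ∈ U, Complex.exp (L z) = z) {z : ℂ} (hz : z ∈ U) : HasDerivAt L (1 / z) z := by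
  have h1 := (hL.differentiableAt (hU.mem_nhds hz)).hasDerivAt
  have h2 := h1.cexp
  have h3 : HasDerivAt (fun w => Complex.exp (L w)) 1 z :=
    (hasDerivAt_id z).congr_of_eventuallyEq (by
      filter_upwards [hU.mem_nhds hz] with w hw
      exact he w hw)
  have h4 := h2.unique h3
  rw [he z hz] at h4
  have hz0 : z ≠ 0 := by rintro rfl; simp at h4
  have : deriv L z = 1 / z := by field_simp; linear_combination h4
  rwa [this] at h1

/-- for a uniformizable structure with parabolic monodromy `z ↦ z + c`,
`c ≠ 0`, each branch `φ_θ = g + (c/2πi)·L_θ` has nonvanishing derivative, and its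
Schwarzian derivative extends to a holomorphic function `ξ` on `𝔻*` having at worst
a pole at `0`. -/
theorem schwarzian_of_parabolic_uniformizable_meromorphic
    (g : ℂ → ℂ) (c : ℂ) (hc : c ≠ 0)
    (hg : DifferentiableOn ℂ g (ball (0 : ℂ) 1 \ {0}))
    (hyp : ∀ θ : ℝ, ∃ L : ℂ → ℂ,
      DifferentiableOn ℂ L (ball (0 : ℂ) 1 \ lray θ) ∧
      (∀ z ∈ ball (0 : ℂ) 1 \ lray θ, Complex.exp (L z) = z) ∧
      InjOn (fun z => g z + c / (2 * (Real.pi : ℂ) * Complex.I) * L z)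
        (ball (0 : ℂ) 1 \ lray θ)) :
    ∀ θ : ℝ, ∀ L : ℂ → ℂ,
      DifferentiableOn ℂ L (ball (0 : ℂ) 1 \ lray θ) →
      (∀ z ∈ ball (0 : ℂ) 1 \ lray θ, Complex.exp (L z) = z) →
      InjOn (fun z => g z + c / (2 * (Real.pi : ℂ) * Complex.I) * L z)
        (ball (0 : ℂ) 1 \ lray θ) →
      (∀ z ∈ ball (0 : ℂ) 1 \ lray θ,
        deriv (fun w => g w + c / (2 * (Real.pi : ℂ) * Complex.I) * L w) z ≠ 0) ∧
      ∃ ξ : ℂ → ℂ, DifferentiableOn ℂ ξ (ball (0 : ℂ) 1 \ {0}) ∧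
        (∀ z ∈ ball (0 : ℂ) 1 \ lray θ,
          ξ z = schwarzian (fun w => g w + c / (2 * (Real.pi : ℂ) * Complex.I) * L w) z) ∧
        ∃ n : ℕ, ∃ Ξ : ℂ → ℂ, DifferentiableOn ℂ Ξ (ball (0 : ℂ) 1) ∧
          ∀ z ∈ ball (0 : ℂ) 1 \ {0}, Ξ z = z ^ n * ξ z := by
  set k := c / (2 * (Real.pi : ℂ) * Complex.I) with hk
  set D : Set ℂ := ball (0 : ℂ) 1 \ {0} with hD
  have hDo : IsOpen D := isOpen_ball.sdiff isClosed_singleton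
  have hUo : ∀ θ, IsOpen (ball (0 : ℂ) 1 \ lray θ) := fun θ => isOpen_ball.sdiff (lray_closed θ)
  have hUD : ∀ θ, ball (0 : ℂ) 1 \ lray θ ⊆ D := by
    rintro θ z ⟨h1, h2⟩
    refine ⟨h1, ?_⟩
    rintro rfl
    exact h2 (zero_mem_lray θ)
  set ψ : ℂ → ℂ := fun z => deriv g z + k * (1 / z) with hψ
  have hψd : DifferentiableOn ℂ ψ D := by
    refine (hg.deriv hDo).add (DifferentiableOn.const_mul ?_ k)
    exact (differentiableOn_const 1).div differentiableOn_id fun z hz => hz.2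
  have hφ : ∀ θ : ℝ, ∀ L : ℂ → ℂ, DifferentiableOn ℂ L (ball (0 : ℂ) 1 \ lray θ) →
      (∀ z ∈ ball (0 : ℂ) 1 \ lray θ, Complex.exp (L z) = z) →
      ∀ z ∈ ball (0 : ℂ) 1 \ lray θ, HasDerivAt (fun w => g w + k * L w) (ψ z) z := by
    intro θ L hL he z hz
    exact (hg.differentiableAt (hDo.mem_nhds (hUD θ hz))).hasDerivAt.add
      ((aux_derivL (hUo θ) hL he hz).const_mul k)
  have hcover : ∀ z ∈ D, ∀ w ∈ ball z ‖z‖, w ∈ ball (0 : ℂ) 1 →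
      w ∈ ball (0 : ℂ) 1 \ lray (Complex.arg z + Real.pi) :=
    fun z _ w hw h1 => ⟨h1, ball_disjoint_lray hw⟩
  have hψ0 : ∀ z ∈ D, ψ z ≠ 0 := by
    intro z hz
    obtain ⟨L, hL, he, hinj⟩ := hyp (Complex.arg z + Real.pi)
    have hzU := hcover z hz z (mem_ball_self (norm_pos_iff.2 hz.2)) hz.1
    have h1 := hφ _ L hL he
    have := (aux_inv (hUo _) (fun w hw => (h1 w hw).differentiableAt.differentiableWithinAt)
      hinj hzU).1
    rwa [(h1 z hzU).deriv] at this
  set u : ℂ → ℂ := fun z => deriv ψ z / ψ z with hu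
  have hud : DifferentiableOn ℂ u D := (hψd.deriv hDo).div hψd hψ0
  have hub : ∀ z ∈ ball (0 : ℂ) (1/2) \ {0}, ‖z * u z‖ ≤ 1280000 := by
    intro z hz
    have hzn : ‖z‖ < 1/2 := by simpa using hz.1
    have hz0 : 0 < ‖z‖ := norm_pos_iff.2 hz.2
    have hzD : z ∈ D := ⟨by simp; linarith, hz.2⟩
    obtain ⟨L, hL, he, hinj⟩ := hyp (Complex.arg z + Real.pi)
    have hsub : ball z ‖z‖ ⊆ ball (0 : ℂ) 1 \ lray (Complex.arg z + Real.pi) := by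
      intro w hw
      refine hcover z hzD w hw ?_
      rw [mem_ball, dist_eq_norm] at hw
      rw [mem_ball_zero_iff]
      have := norm_add_le (w - z) z
      rw [sub_add_cancel] at this
      linarith
    have h1 := hφ _ L hL he
    have h2 := aux_second hz0
      (fun w hw => (h1 w (hsub hw)).differentiableAt.differentiableWithinAt) (hinj.mono hsub)
    have hev : deriv (fun w => g w + k * L w) =ᶠ[𝓝 z] ψ := by
      filter_upwards [ball_mem_nhds z hz0] with w hw
      exact (h1 w (hsub hw)).deriv
    rw [hev.deriv_eq, hev.eq_of_nhds] at h2
    rw [norm_mul, mul_comm]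
    rwa [le_div_iff₀ hz0] at h2
  set V : ℂ → ℂ := Function.update (fun z => z * u z) 0
    (limUnder (𝓝[≠] 0) (fun z => z * u z)) with hV
  have hV1 : DifferentiableOn ℂ V (ball (0 : ℂ) (1/2)) := by
    refine Complex.differentiableOn_update_limUnder_of_bddAbove
      (ball_mem_nhds 0 (by norm_num)) ?_ ⟨1280000, ?_⟩
    · refine differentiableOn_id.mul (hud.mono ?_)
      exact sdiff_subset_sdiff_left (ball_subset_ball (by norm_num))
    · rintro _ ⟨z, hz, rfl⟩
      exact hub z hz
  have hVD : ∀ z ∈ D, V z = z * u z := fun z hz => Function.update_of_ne hz.2 _ _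
  have hV2 : DifferentiableOn ℂ V (ball (0 : ℂ) 1) := by
    intro z hz
    by_cases h0 : z = 0
    · subst h0
      exact (hV1.differentiableAt (ball_mem_nhds 0 (by norm_num))).differentiableWithinAt
    · have hzD : z ∈ D := ⟨hz, h0⟩
      have : DifferentiableOn ℂ V D :=
        (differentiableOn_id.mul hud).congr fun w hw => hVD w hw
      exact (this.differentiableAt (hDo.mem_nhds hzD)).differentiableWithinAt
  intro θ L hL he hinj
  have h1 := hφ θ L hL he
  refine ⟨fun z hz => ?_, fun z => deriv u z - (1/2) * (u z)^2, ?_, ?_, 2,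
    fun z => z * deriv V z - V z - (1/2) * (V z)^2, ?_, ?_⟩
  · rw [(h1 z hz).deriv]
    exact hψ0 z (hUD θ hz)
  · exact (hud.deriv hDo).sub ((hud.pow 2).const_mul _)
  · intro z hz
    have hev : ∀ w ∈ ball (0 : ℂ) 1 \ lray θ, deriv (fun w => g w + k * L w) =ᶠ[𝓝 w] ψ := by
      intro w hw
      filter_upwards [(hUo θ).mem_nhds hw] with v hv
      exact (h1 v hv).deriv
    have hev2 : ∀ w ∈ ball (0 : ℂ) 1 \ lray θ, deriv (deriv (fun w => g w + k * L w)) w /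
        deriv (fun w => g w + k * L w) w = u w := by
      intro w hw
      rw [(hev w hw).deriv_eq, (hev w hw).eq_of_nhds]
    have hev3 : (fun w => deriv (deriv (fun w => g w + k * L w)) w /
        deriv (fun w => g w + k * L w) w) =ᶠ[𝓝 z] u := by
      filter_upwards [(hUo θ).mem_nhds hz] with w hw
      exact hev2 w hw
    unfold schwarzian
    rw [hev3.deriv_eq, hev2 z hz]
  · exact ((differentiableOn_id.mul (hV2.deriv isOpen_ball)).sub hV2).sub
      ((hV2.pow 2).const_mul _)
  · intro z hz
    have hev : V =ᶠ[𝓝 z] fun z => z * u z := by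
      filter_upwards [hDo.mem_nhds hz] with w hw
      exact hVD w hw
    have h3 := (hasDerivAt_id z).mul (hud.differentiableAt (hDo.mem_nhds hz)).hasDerivAt
    have h4 : deriv V z = 1 * u z + z * deriv u z := by
      rw [hev.deriv_eq]; exact h3.deriv
    simp only [h4, hVD z hz]
    ring
end

section
/- Let g be a holomorphic function on the punctured unit disc 𝔻* which extends meromorphically to 0, and let c ∈ ℂ. Assume that for every θ ∈ ℝ there exists a branch L_θ of the logarithm on 𝔻 ∖ l^θ such that the map z ↦ g(z) + (c/(2πi))·L_θ(z) is injective on 𝔻 ∖ l^θ. Then the pole of g at 0 has order at most 1; that is, the function z ↦ z·g(z) extends holomorphically across 0. Equivalently, if g has a pole of order at least 2 at 0 (i.e., there exist an integer k₀ ≤ −2 and a ≠ 0 with z^{−k₀}·g(z) → a as z → 0), then for some θ the map z ↦ g(z) + (c/(2πi))·L_θ(z) fails to be injective on 𝔻 ∖ l^θ. -/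
open Complex Metric Set Filter Topology

lemma hurw (H : ℝ → ℂ → ℂ) (U : Set ℂ) (hU : IsOpen U) (p : ℂ) (hp : p ∈ U)
    (hc : ContinuousOn (Function.uncurry H) (Icc 0 1 ×ˢ U))
    (hd : ∀ r ∈ Icc (0:ℝ) 1, DifferentiableOn ℂ (H r) U)
    (hne : ∀ᶠ w in 𝓝[≠] p, H 0 w ≠ H 0 p) :
    ∀ᶠ r in 𝓝[Icc 0 1] (0:ℝ), ∃ w ∈ U, H r w = H 0 p := by
  have h1 : ∀ᶠ w in 𝓝 p, w ∈ U ∧ (w ≠ p → H 0 w ≠ H 0 p) :=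
    Filter.Eventually.and (hU.mem_nhds hp) (eventually_nhdsWithin_iff.1 hne)
  obtain ⟨ρ, hρ, hb⟩ := Metric.nhds_basis_closedBall.eventually_iff.1 h1
  have hUb : closedBall p ρ ⊆ U := fun w hw => (hb hw).1
  have hsne : (sphere p ρ).Nonempty := NormedSpace.sphere_nonempty.2 hρ.le
  have h01 : (0:ℝ) ∈ Icc (0:ℝ) 1 := by simp
  have hcs : ContinuousOn (fun w => ‖H 0 w - H 0 p‖) (sphere p ρ) :=
    (((hd 0 h01).continuousOn.mono (sphere_subset_closedBall.trans hUb)).sub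
      continuousOn_const).norm
  obtain ⟨x, hx, hmin⟩ := (isCompact_sphere p ρ).exists_isMinOn hsne hcs
  set ε := ‖H 0 x - H 0 p‖ with hε
  have hεpos : 0 < ε := by
    have := (hb (sphere_subset_closedBall hx)).2 (ne_of_mem_sphere hx hρ.ne')
    exact norm_pos_iff.2 (sub_ne_zero.2 this)
  obtain ⟨v, hv, hvp⟩ := (isCompact_closedBall p ρ).mem_uniformity_of_prod
    (hc.mono (prod_mono le_rfl hUb)) h01 (Metric.dist_mem_uniformity (show 0 < ε/8 by positivity))
  filter_upwards [hv, self_mem_nhdsWithin] with r hr hr1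
  have hdist : ∀ w ∈ closedBall p ρ, ‖H r w - H 0 w‖ < ε/8 := fun w hw => by
    have := hvp r hr w hw
    simpa [dist_eq_norm] using this
  have hdc : DiffContOnCl ℂ (H r) (ball p ρ) := by
    apply DifferentiableOn.diffContOnCl
    exact ((hd r hr1).mono hUb).mono closure_ball_subset_closedBall
  have hpb : p ∈ closedBall p ρ := mem_closedBall_self hρ.le
  have hsph : ∀ z ∈ sphere p ρ, ε / 2 ≤ ‖H r z - H r p‖ := by
    intro z hz
    have h2 : ε ≤ ‖H 0 z - H 0 p‖ := hmin hz
    have h3 := hdist z (sphere_subset_closedBall hz)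
    have h4 := hdist p hpb
    have h5 : H 0 z - H 0 p = (H r z - H r p) - (H r z - H 0 z) + (H r p - H 0 p) := by ring
    have h6 := norm_add_le ((H r z - H r p) - (H r z - H 0 z)) (H r p - H 0 p)
    have h7 := norm_sub_le (H r z - H r p) (H r z - H 0 z)
    rw [← h5] at h6
    linarith
  have hfr : ∃ᶠ z in 𝓝 p, H r z ≠ H r p := by
    intro hcon
    have hcon' : H r =ᶠ[𝓝 p] fun _ => H r p := by
      filter_upwards [hcon] with z hz using not_not.1 hz
    have han : AnalyticOnNhd ℂ (H r) (closedBall p ρ) :=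
      ((hd r hr1).analyticOnNhd hU).mono hUb
    have heq := han.eqOn_of_preconnected_of_eventuallyEq analyticOnNhd_const
      (convex_closedBall p ρ).isPreconnected hpb hcon'
    have h8 := hsph x hx
    rw [heq (sphere_subset_closedBall hx)] at h8
    simp at h8
    linarith
  have key := hdc.ball_subset_image_closedBall (ε := ε/2) hρ hsph hfr
  have hm : H 0 p ∈ ball (H r p) (ε/2/2) := by
    rw [mem_ball, dist_comm, dist_eq_norm]
    linarith [hdist p hpb]
  obtain ⟨w, hw, hw2⟩ := key hm
  exact ⟨w, hUb hw, hw2⟩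

lemma lray_pi_compl : (lray Real.pi)ᶜ = slitPlane := by
  ext z
  simp only [lray, mem_compl_iff, mem_ofPred_eq, exp_pi_mul_I, mem_slitPlane_iff_not_le_zero, not_iff_not]
  constructor
  · rintro ⟨t, ht, rfl⟩
    simp [Complex.le_def, ht]
  · intro h
    rw [Complex.le_def] at h
    refine ⟨-z.re, by simpa using h.1, ?_⟩
    apply Complex.ext <;> simp
    simpa using h.2

lemma log_unique (L : ℂ → ℂ) (hL : DifferentiableOn ℂ L (ball (0 : ℂ) 1 ∩ slitPlane))
    (he : ∀ z ∈ ball (0 : ℂ) 1 ∩ slitPlane, exp (L z) = z) :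
    ∃ b : ℂ, ∀ z ∈ ball (0 : ℂ) 1 ∩ slitPlane, L z = log z + b := by
  have ho : IsOpen (ball (0 : ℂ) 1 ∩ slitPlane) := isOpen_ball.inter isOpen_slitPlane
  have hlog : DifferentiableOn ℂ log (ball (0 : ℂ) 1 ∩ slitPlane) := fun z hz =>
    (differentiableAt_log hz.2).differentiableWithinAt
  have hpc : IsPreconnected (ball (0 : ℂ) 1 ∩ slitPlane) := by
    have hs : StarConvex ℝ ((1/2 : ℝ):ℂ) (ball (0 : ℂ) 1 ∩ slitPlane) :=
      ((convex_ball (0:ℂ) 1).starConvex (by simp; norm_num)).inter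
        (starConvex_ofReal_slitPlane (by norm_num))
    exact (hs.isPathConnected ⟨by simp; norm_num, Or.inl (by rw [ofReal_re]; norm_num)⟩).isConnected.isPreconnected
  obtain ⟨b, hb⟩ := ho.exists_eq_add_of_deriv_eq hpc hL hlog (fun z hz => by
    have h1 : HasDerivAt L (deriv L z) z := ((hL z hz).differentiableAt (ho.mem_nhds hz)).hasDerivAt
    have h2 : HasDerivAt (fun z => exp (L z)) 1 z :=
      (hasDerivAt_id z).congr_of_eventuallyEq
        (by filter_upwards [ho.mem_nhds hz] with w hw using he w hw)
    have h3 := h1.cexp.unique h2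
    rw [he z hz] at h3
    rw [(hasDerivAt_log hz.2).deriv]
    exact eq_inv_of_mul_eq_one_right h3)
  exact ⟨b, fun z hz => hb hz⟩

lemma core (G : ℂ → ℂ) (m : ℕ) (hm : 2 ≤ m) (κ : ℂ) (hG : DifferentiableOn ℂ G (ball 0 1))
    (hG0 : G 0 ≠ 0)
    (hinj : InjOn (fun z => (z ^ m)⁻¹ * G z + κ * log z) (ball (0 : ℂ) 1 ∩ slitPlane)) : False := by
  set H : ℝ → ℂ → ℂ := fun r w => (w ^ m)⁻¹ * G (r * w) + κ * (r:ℂ) ^ m * log w with hH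
  have hmr : ∀ r ∈ Icc (0:ℝ) 1, ∀ w ∈ ball (0:ℂ) 1, (r * w : ℂ) ∈ ball (0:ℂ) 1 := by
    intro r hr w hw
    simp only [mem_ball_zero_iff, norm_mul, norm_real, Real.norm_eq_abs, abs_of_nonneg hr.1] at *
    nlinarith [hr.1, hr.2, norm_nonneg w]
  have main : ∀ U ⊆ ball (0 : ℂ) 1 ∩ slitPlane, IsOpen U → ∀ p ∈ U,
      ∀ᶠ r in 𝓝[Icc 0 1] (0:ℝ), ∃ w ∈ U, H r w = H 0 p := by
    intro U hUs hU p hp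
    have h0 : ∀ w ∈ U, w ≠ 0 := fun w hw => slitPlane_ne_zero (hUs hw).2
    apply hurw H U hU p hp
    · have c1 : ContinuousOn (fun x : ℝ × ℂ => G (x.1 * x.2)) (Icc 0 1 ×ˢ U) :=
        hG.continuousOn.comp (by fun_prop) (fun x hx => hmr _ hx.1 _ (hUs hx.2).1)
      have c2 : ContinuousOn (fun x : ℝ × ℂ => log x.2) (Icc 0 1 ×ˢ U) :=
        continuousOn_snd.clog (fun x hx => (hUs hx.2).2)
      have c3 : ContinuousOn (fun x : ℝ × ℂ => (x.2 ^ m)⁻¹) (Icc 0 1 ×ˢ U) :=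
        (continuousOn_snd.pow m).inv₀ (fun x hx => pow_ne_zero _ (h0 _ hx.2))
      exact (c3.mul c1).add (ContinuousOn.mul (by fun_prop) c2)
    · intro r hr
      have c1 : DifferentiableOn ℂ (fun w => G (r * w)) U :=
        hG.comp (by fun_prop) (fun x hx => hmr _ hr _ (hUs hx).1)
      have c2 : DifferentiableOn ℂ log U := fun w hw =>
        (differentiableAt_log (hUs hw).2).differentiableWithinAt
      have c3 : DifferentiableOn ℂ (fun w : ℂ => (w ^ m)⁻¹) U :=
        (differentiableOn_id.pow m).inv (fun x hx => pow_ne_zero _ (h0 _ hx))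
      exact (c3.mul c1).add (c2.const_mul _)
    · have hd : HasDerivAt (fun w : ℂ => w ^ m) (m * p ^ (m-1)) p := hasDerivAt_pow m p
      have := hd.eventually_ne (c := p ^ m) (by
        have : p ^ (m-1) ≠ 0 := pow_ne_zero _ (h0 p hp)
        have : (m:ℂ) ≠ 0 := by exact_mod_cast (by omega : m ≠ 0)
        positivity)
      filter_upwards [this] with w hw h
      have hm0 : m ≠ 0 := by omega
      simp [hH, hm0, hG0] at h
      exact hw h
  set t : ℝ := Real.pi / m with ht
  have hm2 : (2:ℝ) ≤ m := by exact_mod_cast hm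
  have htpos : 0 < t := by positivity
  have htle : t ≤ Real.pi / 2 := by
    rw [ht]; gcongr
  have hsin : 0 < Real.sin t := Real.sin_pos_of_pos_of_lt_pi htpos (by linarith [Real.pi_pos])
  set p : ℂ := exp (t * I) / 2 with hp
  set q : ℂ := exp (-(t * I)) / 2 with hq
  have hpm : p ^ m = - 1/2^m := by
    rw [hp, div_pow, ← exp_nat_mul, ← exp_pi_mul_I]
    congr 2
    have : (m:ℂ) ≠ 0 := by exact_mod_cast (by omega : m ≠ 0)
    rw [ht]; push_cast; field_simp
  have hqm : q ^ m = - 1/2^m := by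
    rw [hq, div_pow, ← exp_nat_mul, ← exp_neg_pi_mul_I]
    congr 2
    have : (m:ℂ) ≠ 0 := by exact_mod_cast (by omega : m ≠ 0)
    rw [ht]; push_cast; field_simp
  have hpn : ‖p‖ < 1 := by
    rw [hp, norm_div, norm_exp_ofReal_mul_I]; norm_num
  have hqn : ‖q‖ < 1 := by
    have : -((t:ℂ) * I) = ((-t : ℝ):ℂ) * I := by push_cast; ring
    rw [hq, this, norm_div, norm_exp_ofReal_mul_I]; norm_num
  have hpim : 0 < p.im := by
    rw [hp, exp_mul_I, ← ofReal_cos, ← ofReal_sin]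
    simp [-ofReal_cos, -ofReal_sin]
    linarith
  have hqim : q.im < 0 := by
    have : -((t:ℂ) * I) = ((-t : ℝ):ℂ) * I := by push_cast; ring
    rw [hq, this, exp_mul_I, ← ofReal_cos, ← ofReal_sin]
    simp [-ofReal_cos, -ofReal_sin]
    linarith
  have hup := main (ball 0 1 ∩ {w | 0 < w.im}) (fun w hw => ⟨hw.1, Or.inr (ne_of_gt hw.2)⟩)
    (isOpen_ball.inter (isOpen_lt continuous_const continuous_im)) p ⟨by simpa using hpn, hpim⟩
  have hlo := main (ball 0 1 ∩ {w | w.im < 0}) (fun w hw => ⟨hw.1, Or.inr (ne_of_lt hw.2)⟩)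
    (isOpen_ball.inter (isOpen_lt continuous_im continuous_const)) q ⟨by simpa using hqn, hqim⟩
  have hpq : H 0 p = H 0 q := by
    have hm0 : m ≠ 0 := by omega
    simp [hH, hpm, hqm, hm0]
  have hle : 𝓝[Ioc 0 1] (0:ℝ) ≤ 𝓝[Icc 0 1] 0 := nhdsWithin_mono _ Ioc_subset_Icc_self
  have : (𝓝[Ioc 0 1] (0:ℝ)).NeBot := by
    rw [nhdsWithin_Ioc_eq_nhdsGT (by norm_num : (0:ℝ) < 1)]; infer_instance
  obtain ⟨r, ⟨⟨w, hw, hwe⟩, ⟨w', hw', hwe'⟩⟩, hr⟩ :=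
    (((hup.and hlo).filter_mono hle).and self_mem_nhdsWithin).exists
  have hrc : (r:ℂ) ≠ 0 := by exact_mod_cast hr.1.ne'
  have hrm := hmr r ⟨hr.1.le, hr.2⟩
  have hform : ∀ w : ℂ, w ≠ 0 → ((r * w) ^ m)⁻¹ * G (r * w) + κ * log (r * w)
      = ((r:ℂ) ^ m)⁻¹ * H r w + κ * Real.log r := by
    intro w hw
    rw [log_ofReal_mul hr.1 hw, hH]
    field_simp
    ring
  have hw0 : w ≠ 0 := by rintro rfl; simpa using hw.2
  have hw0' : w' ≠ 0 := by rintro rfl; simpa using hw'.2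
  have heq : (r * w : ℂ) = r * w' := by
    apply hinj
    · exact ⟨hrm _ hw.1, Or.inr (by simpa using ⟨hr.1.ne', (ne_of_gt hw.2)⟩)⟩
    · exact ⟨hrm _ hw'.1, Or.inr (by simpa using ⟨hr.1.ne', (ne_of_lt hw'.2)⟩)⟩
    · simp only
      rw [hform w hw0, hform w' hw0', hwe, hwe', hpq]
  have := mul_left_cancel₀ hrc heq
  subst this
  exact lt_asymm (show 0 < w.im from hw.2) (show w.im < 0 from hw'.2)

/-- Lemma `k₀ ≥ -1`: if `g` is holomorphic on `𝔻*`, extends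
meromorphically to `0`, and for every `θ` some branch `g + (c/2πi)·L_θ` is injective
on `𝔻 ∖ l^θ`, then the pole of `g` at `0` has order at most `1`: `z·g(z)` extends
holomorphically across `0`. -/
theorem pole_order_at_most_one_of_injective_branches
    (g : ℂ → ℂ) (c : ℂ)
    (hg : DifferentiableOn ℂ g (ball (0 : ℂ) 1 \ {0}))
    (hmero : ∃ n : ℕ, ∃ G : ℂ → ℂ, DifferentiableOn ℂ G (ball (0 : ℂ) 1) ∧
      ∀ z ∈ ball (0 : ℂ) 1 \ {0}, G z = z ^ n * g z)
    (hyp : ∀ θ : ℝ, ∃ L : ℂ → ℂ,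
      DifferentiableOn ℂ L (ball (0 : ℂ) 1 \ lray θ) ∧
      (∀ z ∈ ball (0 : ℂ) 1 \ lray θ, Complex.exp (L z) = z) ∧
      InjOn (fun z => g z + c / (2 * (Real.pi : ℂ) * Complex.I) * L z)
        (ball (0 : ℂ) 1 \ lray θ)) :
    ∃ G : ℂ → ℂ, DifferentiableOn ℂ G (ball (0 : ℂ) 1) ∧
      ∀ z ∈ ball (0 : ℂ) 1 \ {0}, G z = z * g z := by
  classical
  let P : ℕ → Prop := fun n => ∃ G : ℂ → ℂ, DifferentiableOn ℂ G (ball (0 : ℂ) 1) ∧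
      ∀ z ∈ ball (0 : ℂ) 1 \ {0}, G z = z ^ n * g z
  have hP : ∃ n, P n := hmero
  obtain ⟨G, hGd, hGe⟩ := Nat.find_spec hP
  have hmin : ∀ k < Nat.find hP, ¬ P k := fun k hk => Nat.find_min hP hk
  set m := Nat.find hP with hmdef
  clear_value m
  by_cases hm : m ≤ 1
  · refine ⟨fun z => z ^ (1 - m) * G z, (differentiableOn_id.pow _).mul hGd, fun z hz => ?_⟩
    simp only
    rw [hGe z hz, ← mul_assoc, ← pow_add, Nat.sub_add_cancel hm, pow_one]
  exfalso
  push Not at hm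
  have hG0 : G 0 ≠ 0 := by
    intro h0
    refine hmin (m - 1) (by omega) ⟨dslope G 0,
      (differentiableOn_dslope (ball_mem_nhds 0 one_pos)).2 hGd, fun z hz => ?_⟩
    have hz0 : z ≠ 0 := hz.2
    rw [dslope_of_ne _ hz0, slope_def_field, h0, hGe z hz, sub_zero, sub_zero]
    obtain ⟨k, rfl⟩ : ∃ k, m = k + 1 := ⟨m - 1, by omega⟩
    rw [Nat.add_sub_cancel, pow_succ]
    field_simp
  obtain ⟨L, hL, hLe, hinj⟩ := hyp Real.pi
  rw [sdiff_eq, lray_pi_compl] at hL hLe hinj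
  obtain ⟨b, hb⟩ := log_unique L hL hLe
  refine core G m hm (c / (2 * (Real.pi : ℂ) * Complex.I)) hGd hG0 ?_
  intro z hz w hw h
  have hg' : ∀ z ∈ ball (0 : ℂ) 1 ∩ slitPlane, (z ^ m)⁻¹ * G z = g z := by
    intro z hz
    have hz0 := slitPlane_ne_zero hz.2
    rw [hGe z ⟨hz.1, hz0⟩]
    field_simp
  apply hinj hz hw
  simp only at h ⊢
  rw [hg' z hz, hg' w hw] at h
  rw [hb z hz, hb w hw]
  linear_combination h
end

section
/- Let g be a holomorphic function on the punctured unit disc 𝔻* and let c ∈ ℂ. Assume that for every θ ∈ ℝ there exists a branch L_θ of the logarithm on 𝔻 ∖ l^θ such that the map φ_θ(z) = g(z) + (c/(2πi))·L_θ(z) is injective on 𝔻 ∖ l^θ. Fix such a θ and branch L_θ. Then the set of accumulation values of φ_θ at 0, namely the set of points p in the one-point compactification ℂ ∪ {∞} for which there exists a sequence (z_n) in 𝔻 ∖ l^θ with z_n → 0 and φ_θ(z_n) → p, is countable. -/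
open Complex Metric Set Filter Topology

lemma exists_sqrt_ball {F : ℂ → ℂ} {w : ℂ} {r : ℝ} (hr : 0 < r)
    (hF : DifferentiableOn ℂ F (ball w r)) (h0 : ∀ z ∈ ball w r, F z ≠ 0) :
    ∃ h : ℂ → ℂ, DifferentiableOn ℂ h (ball w r) ∧ ∀ z ∈ ball w r, h z ^ 2 = F z := by
  have hd : DifferentiableOn ℂ (fun z => deriv F z / F z) (ball w r) :=
    (hF.deriv isOpen_ball).div hF h0
  obtain ⟨G, hGw, hG⟩ := hd.isExactOn_ball.with_val_at w (Complex.log (F w))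
  have hw : w ∈ ball w r := mem_ball_self hr
  have hGd : ∀ z ∈ ball w r, HasDerivAt G (deriv F z / F z) z := hG
  have hFd : ∀ z ∈ ball w r, HasDerivAt F (deriv F z) z := fun z hz =>
    (hF.differentiableAt (isOpen_ball.mem_nhds hz)).hasDerivAt
  have hc : ∀ z ∈ ball w r, HasDerivAt (fun z => F z * Complex.exp (-G z)) 0 z := by
    intro z hz
    have := (hFd z hz).mul (hGd z hz).neg.cexp
    have e : deriv F z * Complex.exp (-G z) +
        F z * (Complex.exp (-G z) * -(deriv F z / F z)) = 0 := by
      have := h0 z hz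
      field_simp
      ring
    rw [← e]
    exact this
  have hconst : ∀ z ∈ ball w r, F z * Complex.exp (-G z) = 1 := by
    intro z hz
    have := isOpen_ball.is_const_of_deriv_eq_zero (convex_ball w r).isPreconnected
      (fun z hz => (hc z hz).differentiableAt.differentiableWithinAt)
      (fun z hz => (hc z hz).deriv) hz hw
    rw [this, hGw, Complex.exp_neg, Complex.exp_log (h0 w hw), mul_inv_cancel₀ (h0 w hw)]
  refine ⟨fun z => Complex.exp (G z / 2), fun z hz =>
    ((hGd z hz).differentiableAt.div_const 2).cexp.differentiableWithinAt, fun z hz => ?_⟩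
  have := hconst z hz
  rw [Complex.exp_neg, mul_inv_eq_one₀ (Complex.exp_ne_zero _)] at this
  simp only
  rw [this, ← Complex.exp_nat_mul]
  congr 1
  push_cast
  ring

lemma weak_koebe {f : ℂ → ℂ} {w : ℂ} 
    (hf : DifferentiableOn ℂ f (ball w 2)) (hinj : InjOn f (ball w 2))
    (h0 : ∀ z ∈ ball w 2, f z ≠ 0) : ‖deriv f w‖ ≤ 20 * ‖f w‖ := by
  have hw : w ∈ ball w 2 := mem_ball_self (by norm_num)
  have hopen : ∀ s ⊆ ball w 2, IsOpen s → IsOpen (f '' s) := by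
    rcases (hf.analyticOnNhd isOpen_ball).is_constant_or_isOpen
      (convex_ball w 2).isPreconnected with ⟨y, hy⟩ | h
    · exfalso
      have h1 : w + 1 ∈ ball w 2 := by simp
      have := hinj h1 hw ((hy _ h1).trans (hy _ hw).symm)
      simp at this
    · exact h
  set V := f '' ball w 2 with hV
  have hVo : IsOpen V := hopen _ Subset.rfl isOpen_ball
  have h0V : (0 : ℂ) ∈ Vᶜ := by
    rintro ⟨z, hz, hz0⟩
    exact h0 z hz hz0
  obtain ⟨a, haV, had⟩ := hVo.isClosed_compl.exists_infDist_eq_dist ⟨0, h0V⟩ (f w)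
  have hd_le : dist (f w) a ≤ ‖f w‖ := by
    rw [← had, ← dist_zero_right]
    exact infDist_le_dist_of_mem h0V
  have hballV : ball (f w) (dist (f w) a) ⊆ V := by
    intro y hy
    by_contra hyV
    have := infDist_le_dist_of_mem (x := f w) (show y ∈ Vᶜ from hyV)
    rw [had] at this
    rw [mem_ball, dist_comm] at hy
    linarith
  have hFne : ∀ z ∈ ball w 2, f z - a ≠ 0 := by
    intro z hz h
    exact haV ⟨z, hz, sub_eq_zero.mp h⟩
  obtain ⟨h, hhd, hsq⟩ := exists_sqrt_ball (by norm_num) (hf.sub_const a) hFne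
  have hhne : ∀ z ∈ ball w 2, h z ≠ 0 := by
    intro z hz h0
    apply hFne z hz
    rw [← hsq z hz, h0]; simp
  have hnsq : ‖h w‖ ^ 2 = dist (f w) a := by
    rw [← norm_pow, hsq w hw, dist_eq_norm]
  have hpos : 0 < ‖h w‖ := norm_pos_iff.mpr (hhne w hw)
  -- inverse
  set k := Function.invFunOn f (ball w 2) with hk
  have hkmem : ∀ y ∈ V, k y ∈ ball w 2 := fun y hy => Function.invFunOn_mem hy
  have hkeq : ∀ y ∈ V, f (k y) = y := fun y hy => Function.invFunOn_eq hy
  have hkc : ContinuousOn k V := by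
    intro y hy
    apply ContinuousAt.continuousWithinAt
    intro O hO
    obtain ⟨O', hO'O, hO', hyO'⟩ := _root_.mem_nhds_iff.mp hO
    have : f '' (O' ∩ ball w 2) ∈ 𝓝 y :=
      (hopen _ inter_subset_right (hO'.inter isOpen_ball)).mem_nhds
        ⟨k y, ⟨hyO', hkmem y hy⟩, hkeq y hy⟩
    refine mem_map.mpr ?_
    filter_upwards [this]
    rintro _ ⟨x, ⟨hx1, hx2⟩, rfl⟩
    have : k (f x) = x := hinj (hkmem _ ⟨x, hx2, rfl⟩) hx2 (hkeq _ ⟨x, hx2, rfl⟩)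
    show k (f x) ∈ O
    rw [this]; exact hO'O hx1
  set B := ball (h w) (2 / 5 * ‖h w‖) with hB
  have hBne : ∀ x ∈ B, x ≠ 0 := by
    rintro x hx rfl
    rw [hB, mem_ball, dist_zero_left] at hx
    linarith
  have hBV : ∀ x ∈ B, x ^ 2 + a ∈ V := by
    intro x hx
    apply hballV
    rw [mem_ball, dist_eq_norm, ← hnsq]
    have e : x ^ 2 + a - f w = (x - h w) * ((x - h w) + 2 * h w) := by
      have := hsq w hw
      linear_combination this
    rw [hB, mem_ball, dist_eq_norm] at hx
    rw [e, norm_mul]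
    have h2 : ‖(x - h w) + 2 * h w‖ ≤ ‖x - h w‖ + 2 * ‖h w‖ := by
      refine (norm_add_le _ _).trans ?_
      simp
    nlinarith [norm_nonneg (x - h w)]
  have hkB : EqOn (fun x => h (k (x ^ 2 + a))) (fun x => x) B := by
    refine (convex_ball _ _).isPreconnected.eq_of_sq_eq (y := h w) ?_ continuousOn_id ?_ ?_ ?_ ?_
    · refine hhd.continuousOn.comp (hkc.comp (by fun_prop) hBV) ?_
      intro x hx
      exact hkmem _ (hBV x hx)
    · intro x hx
      simp only [Pi.pow_apply]
      rw [hsq _ (hkmem _ (hBV x hx)), hkeq _ (hBV x hx)]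
      ring
    · intro x hx
      exact hBne x hx
    · exact mem_ball_self (by positivity)
    · have : h w ^ 2 + a = f w := by rw [hsq w hw]; ring
      rw [this]
      congr 1
      exact hinj (hkmem _ ⟨w, hw, rfl⟩) hw (hkeq _ ⟨w, hw, rfl⟩)
  have homit : ∀ z ∈ ball w 2, 2 / 5 * ‖h w‖ ≤ ‖h z + h w‖ := by
    intro z hz
    by_contra! hlt
    have hxB : -h z ∈ B := by
      rw [hB, mem_ball, dist_eq_norm, ← norm_neg]
      rwa [show -(-h z - h w) = h z + h w by ring]
    have h1 := hkB hxB
    simp only at h1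
    have h2 : (-h z) ^ 2 + a = f z := by rw [neg_sq, hsq z hz]; ring
    rw [h2] at h1
    have h3 : k (f z) = z := hinj (hkmem _ ⟨z, hz, rfl⟩) hz (hkeq _ ⟨z, hz, rfl⟩)
    rw [h3] at h1
    exact hhne z hz (self_eq_neg.mp h1)
  have hne2 : ∀ z ∈ ball w 2, h z + h w ≠ 0 := by
    intro z hz h0
    have := homit z hz
    rw [h0, norm_zero] at this
    linarith
  have hψ : DifferentiableOn ℂ (fun z => (h z + h w)⁻¹) (ball w 2) :=
    (hhd.add_const _).inv hne2
  have hsub : closedBall w 1 ⊆ ball w 2 := closedBall_subset_ball (by norm_num)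
  have hC : ‖deriv (fun z => (h z + h w)⁻¹) w‖ ≤ (2 / 5 * ‖h w‖)⁻¹ / 1 := by
    apply Complex.norm_deriv_le_of_forall_mem_sphere_norm_le one_pos
    · exact (hψ.mono hsub).diffContOnCl_ball Subset.rfl
    · intro z hz
      rw [norm_inv]
      exact inv_anti₀ (by positivity) (homit z (hsub (sphere_subset_closedBall hz)))
  have hhw := (hhd.differentiableAt (isOpen_ball.mem_nhds hw)).hasDerivAt
  have hD := ((hhw.add_const (h w)).inv (hne2 w hw)).deriv
  have hD' : deriv (fun z => (h z + h w)⁻¹) w = -deriv h w / (h w + h w) ^ 2 := hD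
  have hfd : deriv f w = 2 * h w * deriv h w := by
    have e : (fun z => f z - a) =ᶠ[𝓝 w] fun z => h z ^ 2 := by
      filter_upwards [isOpen_ball.mem_nhds hw] with z hz
      exact (hsq z hz).symm
    have := e.deriv_eq
    rw [deriv_sub_const] at this
    rw [this]
    have h5 := (hhw.pow 2).deriv
    refine Eq.trans h5 ?_
    simp
  rw [hD', ← two_mul] at hC
  rw [norm_div, norm_neg, norm_pow, norm_mul, div_one, div_le_iff₀ (by simp; positivity)] at hC
  have h2 : ‖(2:ℂ)‖ = 2 := by simp
  rw [h2] at hC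
  have hC' : ‖deriv h w‖ ≤ 10 * ‖h w‖ := by
    refine hC.trans (le_of_eq ?_)
    field_simp
    ring
  rw [hfd, norm_mul, norm_mul, h2]
  nlinarith

def hstrip (α : ℝ) : Set ℂ := {w : ℂ | w.re < 0} ∩ {w : ℂ | |w.im - α| < Real.pi}

lemma hstrip_open (α : ℝ) : IsOpen (hstrip α) :=
  (isOpen_lt (by fun_prop) (by fun_prop)).inter (isOpen_lt (by fun_prop) (by fun_prop))

lemma hstrip_preconn (α : ℝ) : IsPreconnected (hstrip α) := by
  have : hstrip α = {w : ℂ | w.re < 0} ∩ ({w : ℂ | w.im < α + Real.pi} ∩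
      {w : ℂ | α - Real.pi < w.im}) := by
    ext w
    simp only [hstrip, mem_inter_iff, mem_ofPred_eq, abs_lt]
    constructor <;> rintro ⟨h1, h2, h3⟩ <;> refine ⟨h1, ?_, ?_⟩ <;> linarith
  rw [this]
  exact ((convex_halfSpace_re_lt 0).inter
    ((convex_halfSpace_im_lt _).inter (convex_halfSpace_im_gt _))).isPreconnected

lemma exp_mem_slit_s12 {α : ℝ} {w : ℂ} (hw : w ∈ hstrip α) :
    Complex.exp w ∈ ball (0 : ℂ) 1 \ lray (α + Real.pi) := by
  obtain ⟨h1, h2⟩ := hw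
  refine ⟨?_, ?_⟩
  · rw [mem_ball_zero_iff, Complex.norm_exp]
    exact (Real.exp_lt_exp.mpr h1).trans_eq Real.exp_zero
  · rintro ⟨t, ht, h⟩
    have ht0 : t ≠ 0 := by
      rintro rfl
      simp at h
    have htp : 0 < t := lt_of_le_of_ne ht ht0.symm
    have ht' : (t : ℂ) = Complex.exp (Real.log t : ℂ) := by
      rw [← Complex.ofReal_exp, Real.exp_log htp]
    rw [ht', ← Complex.exp_add, Complex.exp_eq_exp_iff_exists_int] at h
    obtain ⟨n, hn⟩ := h
    have him := congrArg Complex.im hn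
    simp at him
    have e : w.im - α = Real.pi * (2 * n + 1) := by rw [him]; ring
    simp only [mem_ofPred_eq] at h2
    rw [e, abs_mul, abs_of_pos Real.pi_pos] at h2
    have h3 : |(2 * n + 1 : ℝ)| < 1 := by
      by_contra! hh
      nlinarith [Real.pi_pos]
    have h4 : |2 * n + 1| < 1 := by exact_mod_cast h3
    rw [abs_lt] at h4
    omega

lemma exp_surj_slit {θ : ℝ} {z : ℂ} (hz : z ∈ ball (0 : ℂ) 1 \ lray θ) :
    ∃ w ∈ hstrip (θ - Real.pi), Complex.exp w = z := by
  have hz0 : z ≠ 0 := by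
    rintro rfl
    exact hz.2 ⟨0, le_rfl, by simp⟩
  set y := -z * Complex.exp (-(θ * I)) with hy
  have hy0 : y ≠ 0 := by simp [hy, hz0]
  have hny : ‖y‖ = ‖z‖ := by
    rw [hy, norm_mul, norm_neg, show -((θ : ℂ) * I) = ((-θ : ℝ) : ℂ) * I by push_cast; ring,
      Complex.norm_exp_ofReal_mul_I, mul_one]
  have hzy : z = -y * Complex.exp (θ * I) := by
    rw [hy]
    have : Complex.exp (-(θ * I)) * Complex.exp (θ * I) = 1 := by
      rw [← Complex.exp_add]; simp
    linear_combination (-z) * this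
  refine ⟨Complex.log y + ((θ - Real.pi : ℝ) : ℂ) * I, ⟨?_, ?_⟩, ?_⟩
  · simp only [mem_ofPred_eq, Complex.add_re, Complex.log_re, Complex.re_ofReal_mul, Complex.I_re,
      mul_zero, add_zero, hny]
    exact Real.log_neg (norm_pos_iff.mpr hz0) (mem_ball_zero_iff.mp hz.1)
  · simp only [mem_ofPred_eq, Complex.add_im, Complex.log_im, Complex.im_ofReal_mul, Complex.I_im,
      mul_one, add_sub_cancel_right]
    rw [abs_lt]
    refine ⟨Complex.neg_pi_lt_arg y, lt_of_le_of_ne (Complex.arg_le_pi y) ?_⟩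
    intro h
    rw [Complex.arg_eq_pi_iff] at h
    apply hz.2
    refine ⟨-y.re, by linarith [h.1], ?_⟩
    have : y = (y.re : ℂ) := Complex.ext (by simp) (by simp [h.2])
    rw [hzy]
    push_cast
    rw [← this]
  · rw [Complex.exp_add, Complex.exp_log hy0, hzy]
    push_cast
    rw [sub_mul, Complex.exp_sub, Complex.exp_pi_mul_I]
    ring

lemma branch_eq {α : ℝ} {L : ℂ → ℂ}
    (hL : DifferentiableOn ℂ L (ball (0 : ℂ) 1 \ lray (α + Real.pi)))
    (hexp : ∀ z ∈ ball (0 : ℂ) 1 \ lray (α + Real.pi), Complex.exp (L z) = z) :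
    ∃ K : ℂ, ∀ w ∈ hstrip α, L (Complex.exp w) = w + K := by
  have hd : DifferentiableOn ℂ (fun w => L (Complex.exp w) - w) (hstrip α) := by
    refine DifferentiableOn.sub (hL.comp (by fun_prop) fun w hw => exp_mem_slit_s12 hw) (by fun_prop)
  have h1 : ∀ w ∈ hstrip α, Complex.exp (L (Complex.exp w) - w) = 1 := by
    intro w hw
    rw [Complex.exp_sub, hexp _ (exp_mem_slit_s12 hw), div_self (Complex.exp_ne_zero _)]
  have h2 : EqOn (deriv (fun w => L (Complex.exp w) - w)) 0 (hstrip α) := by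
    intro w hw
    have hn := (hstrip_open α).mem_nhds hw
    have h3 := (hd.differentiableAt hn).hasDerivAt.cexp
    have h4 : (fun w => Complex.exp (L (Complex.exp w) - w)) =ᶠ[𝓝 w] fun _ => 1 := by
      filter_upwards [hn] with x hx
      exact h1 x hx
    have h5 := h3.deriv
    rw [h4.deriv_eq] at h5
    simp only [deriv_const] at h5
    have := (mul_eq_zero.mp h5.symm).resolve_left (Complex.exp_ne_zero _)
    exact this
  have hw0 : (-1 + α * I : ℂ) ∈ hstrip α := by
    constructor <;> simp [Real.pi_pos]
  refine ⟨L (Complex.exp (-1 + α * I)) - (-1 + α * I), fun w hw => ?_⟩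
  have := (hstrip_open α).is_const_of_deriv_eq_zero (hstrip_preconn α) hd h2 hw hw0
  rw [← this]
  ring

lemma line_growth {Φ : ℂ → ℂ} {α : ℝ} (hd : DifferentiableOn ℂ Φ (hstrip α))
    (hinj : InjOn Φ (hstrip α)) (t : ℝ) (ht : 0 ≤ t) :
    ‖Φ ((-3 - t : ℝ) + α * I) - Φ (-1 + α * I)‖ ≤
      ‖Φ (-3 + α * I) - Φ (-1 + α * I)‖ * Real.exp (20 * t) := by
  set p := Φ (-1 + α * I) with hp
  have hw0 : (-1 + α * I : ℂ) ∈ hstrip α := by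
    constructor <;> simp [Real.pi_pos]
  have hsub : ∀ x : ℝ, 0 ≤ x → ∀ z ∈ ball (((-3 - x : ℝ) : ℂ) + α * I) 2,
      z ∈ hstrip α ∧ z.re < -1 := by
    intro x hx z hz
    rw [mem_ball, dist_eq_norm] at hz
    have h1 := (Complex.abs_re_le_norm _).trans_lt hz
    have h2 := (Complex.abs_im_le_norm _).trans_lt hz
    simp at h1 h2
    have h3 := (abs_lt.mp h1).2
    have := Real.pi_gt_three
    refine ⟨⟨?_, ?_⟩, ?_⟩
    · simp only [mem_ofPred_eq]; linarith
    · simp only [mem_ofPred_eq]; linarith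
    · linarith
  have hda : ∀ x : ℝ, 0 ≤ x → DifferentiableAt ℂ Φ (((-3 - x : ℝ) : ℂ) + α * I) := by
    intro x hx
    exact hd.differentiableAt ((hstrip_open α).mem_nhds (hsub x hx _ (mem_ball_self two_pos)).1)
  have hder : ∀ x : ℝ, 0 ≤ x → HasDerivAt (fun s : ℝ => Φ (((-3 - s : ℝ) : ℂ) + α * I) - p)
      (-deriv Φ (((-3 - x : ℝ) : ℂ) + α * I)) x := by
    intro x hx
    have h1 : HasDerivAt (fun s : ℝ => ((-3 - s : ℝ) : ℂ) + α * I) (-1) x := by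
      have := (((hasDerivAt_id x).const_sub (-3)).ofReal_comp).add_const ((α : ℂ) * I)
      simpa using this
    have := ((hda x hx).hasDerivAt.comp x h1).sub_const p
    simpa [Function.comp_def] using this
  have hb : ∀ x : ℝ, 0 ≤ x → ‖-deriv Φ (((-3 - x : ℝ) : ℂ) + α * I)‖ ≤
      20 * ‖Φ (((-3 - x : ℝ) : ℂ) + α * I) - p‖ := by
    intro x hx
    rw [norm_neg]
    have := weak_koebe (f := fun z => Φ z - p) (w := ((-3 - x : ℝ) : ℂ) + α * I)
      ((hd.mono fun z hz => (hsub x hx z hz).1).sub_const p)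
      (fun a ha b hb hab => hinj (hsub x hx a ha).1 (hsub x hx b hb).1 (by simpa using hab))
      (fun z hz h0 => by
        have := hinj (hsub x hx z hz).1 hw0 (sub_eq_zero.mp h0)
        have h2 := (hsub x hx z hz).2
        rw [this] at h2
        simp at h2)
    rwa [deriv_sub_const] at this
  have := norm_le_gronwallBound_of_norm_deriv_right_le
    (f := fun s : ℝ => Φ (((-3 - s : ℝ) : ℂ) + α * I) - p)
    (f' := fun x => -deriv Φ (((-3 - x : ℝ) : ℂ) + α * I)) (δ := ‖Φ (-3 + α * I) - p‖)
    (K := 20) (ε := 0) (a := 0) (b := t)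
    (fun x hx => (hder x hx.1).continuousAt.continuousWithinAt)
    (fun x hx => (hder x hx.1).hasDerivWithinAt) (by simp)
    (fun x hx => by simpa using hb x hx.1) t ⟨ht, le_rfl⟩
  simpa [gronwallBound_ε0] using this

lemma lift_inj {g : ℂ → ℂ} {c' : ℂ} {α : ℝ} {L' : ℂ → ℂ}
    (hL : DifferentiableOn ℂ L' (ball (0 : ℂ) 1 \ lray (α + Real.pi)))
    (hexp : ∀ z ∈ ball (0 : ℂ) 1 \ lray (α + Real.pi), Complex.exp (L' z) = z)
    (hinj : InjOn (fun z => g z + c' * L' z) (ball (0 : ℂ) 1 \ lray (α + Real.pi))) :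
    InjOn (fun w => g (Complex.exp w) + c' * w) (hstrip α) := by
  obtain ⟨K, hK⟩ := branch_eq hL hexp
  intro a ha b hb hab
  have h1 : Complex.exp a = Complex.exp b := by
    apply hinj (exp_mem_slit_s12 ha) (exp_mem_slit_s12 hb)
    simp only at hab ⊢
    rw [hK a ha, hK b hb]
    linear_combination hab
  have h2 := hK a ha
  rw [h1, hK b hb] at h2
  exact (add_right_cancel h2).symm

lemma g_bound {g : ℂ → ℂ} {c' : ℂ}
    (hg : DifferentiableOn ℂ g (ball (0 : ℂ) 1 \ {0}))
    (hinj : ∀ α : ℝ, InjOn (fun w => g (Complex.exp w) + c' * w) (hstrip α)) :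
    ∃ D : ℝ, ∀ z ∈ ball (0 : ℂ) (Real.exp (-3)) \ {0}, ‖z ^ 20 * g z‖ ≤ D := by
  set Φ : ℂ → ℂ := fun w => g (Complex.exp w) + c' * w with hΦ
  have hΦd : DifferentiableOn ℂ Φ {w : ℂ | w.re < 0} := by
    refine DifferentiableOn.add (hg.comp (by fun_prop) ?_) (by fun_prop)
    intro w hw
    refine ⟨?_, by simp⟩
    rw [mem_ball_zero_iff, Complex.norm_exp]
    exact (Real.exp_lt_exp.mpr hw).trans_eq Real.exp_zero
  have hc1 : Continuous (fun α : ℝ => Φ (-1 + α * I)) := by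
    refine hΦd.continuousOn.comp_continuous (by fun_prop) ?_
    intro x; simp
  have hc3 : Continuous (fun α : ℝ => Φ (-3 + α * I)) := by
    refine hΦd.continuousOn.comp_continuous (by fun_prop) ?_
    intro x; simp
  obtain ⟨A, hA⟩ := (isCompact_Icc (a := -Real.pi) (b := Real.pi)).exists_bound_of_continuousOn
    (hc3.sub hc1).continuousOn
  obtain ⟨B, hB⟩ := (isCompact_Icc (a := -Real.pi) (b := Real.pi)).exists_bound_of_continuousOn
    hc1.continuousOn
  refine ⟨A + B + ‖c'‖ * 8, ?_⟩
  rintro z ⟨hz, hz0⟩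
  have hz0 : z ≠ 0 := hz0
  have hzn : 0 < ‖z‖ := norm_pos_iff.mpr hz0
  rw [mem_ball_zero_iff] at hz
  have hlog : Real.log ‖z‖ < -3 := by
    rwa [Real.log_lt_iff_lt_exp hzn]
  set t := -3 - Real.log ‖z‖ with ht
  have ht0 : 0 ≤ t := by linarith
  set α := Complex.arg z with hα
  have hαm : α ∈ Icc (-Real.pi) Real.pi := ⟨(Complex.neg_pi_lt_arg z).le, Complex.arg_le_pi z⟩
  have hw : ((-3 - t : ℝ) : ℂ) + α * I = Complex.log z := by
    apply Complex.ext <;> simp [ht, hα, Complex.log_re, Complex.log_im]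
  have h1 := line_growth (hΦd.mono inter_subset_left) (hinj α) t ht0
  have hA' := hA α hαm
  have hB' := hB α hαm
  rw [hw] at h1
  have hgz : g z = (Φ (Complex.log z) - Φ (-1 + α * I)) + Φ (-1 + α * I) - c' * Complex.log z := by
    simp only [hΦ, Complex.exp_log hz0]
    ring
  have hlogn : ‖Complex.log z‖ ≤ 7 + t := by
    rw [← hw]
    refine (norm_add_le _ _).trans ?_
    rw [norm_mul, Complex.norm_I, mul_one, Complex.norm_real, Complex.norm_real, Real.norm_eq_abs,
      Real.norm_eq_abs, abs_of_nonpos (by linarith)]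
    have : |α| ≤ Real.pi := Complex.abs_arg_le_pi z
    linarith [Real.pi_le_four]
  set E := Real.exp (20 * t) with hE
  have hE1 : 20 * t + 1 ≤ E := Real.add_one_le_exp _
  have hA0 : 0 ≤ A := (norm_nonneg _).trans hA'
  have hB0 : 0 ≤ B := (norm_nonneg _).trans hB'
  have hgb : ‖g z‖ ≤ (A + B + ‖c'‖ * 8) * E := by
    rw [hgz]
    refine (norm_sub_le _ _).trans ?_
    rw [norm_mul]
    have h2 := norm_add_le (Φ (Complex.log z) - Φ (-1 + α * I)) (Φ (-1 + α * I))
    have h3 : ‖Φ (Complex.log z) - Φ (-1 + α * I)‖ ≤ A * E :=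
      h1.trans (mul_le_mul_of_nonneg_right hA' (Real.exp_pos _).le)
    have h4 : ‖Φ (-1 + α * I)‖ ≤ B * E := hB'.trans (by nlinarith)
    have h5 : ‖c'‖ * ‖Complex.log z‖ ≤ ‖c'‖ * (8 * E) :=
      mul_le_mul_of_nonneg_left (by linarith) (norm_nonneg _)
    nlinarith
  have hzE : ‖z‖ ^ 20 * E ≤ 1 := by
    have : ‖z‖ = Real.exp (-3 - t) := by
      rw [ht, show -3 - (-3 - Real.log ‖z‖) = Real.log ‖z‖ by ring, Real.exp_log hzn]
    rw [this, ← Real.exp_nat_mul, hE, ← Real.exp_add, Real.exp_le_one_iff]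
    push_cast
    linarith
  rw [norm_mul, norm_pow]
  calc ‖z‖ ^ 20 * ‖g z‖ ≤ ‖z‖ ^ 20 * ((A + B + ‖c'‖ * 8) * E) :=
        mul_le_mul_of_nonneg_left hgb (by positivity)
    _ = (A + B + ‖c'‖ * 8) * (‖z‖ ^ 20 * E) := by ring
    _ ≤ (A + B + ‖c'‖ * 8) * 1 := mul_le_mul_of_nonneg_left hzE (by positivity)
    _ = _ := mul_one _

lemma g_mero {g : ℂ → ℂ} {c' : ℂ}
    (hg : DifferentiableOn ℂ g (ball (0 : ℂ) 1 \ {0}))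
    (hinj : ∀ α : ℝ, InjOn (fun w => g (Complex.exp w) + c' * w) (hstrip α)) :
    MeromorphicAt g 0 := by
  obtain ⟨D, hD⟩ := g_bound hg hinj
  have hn : ball (0 : ℂ) (Real.exp (-3)) ∈ 𝓝 (0 : ℂ) := ball_mem_nhds _ (Real.exp_pos _)
  have hle : Real.exp (-3) ≤ 1 := Real.exp_le_one_iff.mpr (by norm_num)
  have hd : DifferentiableOn ℂ (fun z => z ^ 20 * g z) (ball (0 : ℂ) (Real.exp (-3)) \ {0}) :=
    DifferentiableOn.mul (by fun_prop)
      (hg.mono (diff_subset_diff_left (ball_subset_ball hle)))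
  have hu := Complex.differentiableOn_update_limUnder_of_bddAbove hn hd (by
    refine ⟨D, ?_⟩
    rintro _ ⟨z, hz, rfl⟩
    exact hD z hz)
  have ha := (hu.analyticAt hn).meromorphicAt
  have hid : MeromorphicAt (fun z : ℂ => z ^ 20) 0 := (analyticAt_id.pow 20).meromorphicAt
  refine (hid.inv.mul ha).congr ?_
  filter_upwards [self_mem_nhdsWithin] with z hz
  have hz : z ≠ 0 := hz
  simp [Function.update_of_ne hz, hz]

lemma coe_tendsto_infty {l : Filter ℂ} {φ : ℂ → ℂ} (h : Tendsto (fun z => ‖φ z‖) l atTop) :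
    Tendsto (fun z => ((φ z : ℂ) : OnePoint ℂ)) l (𝓝 OnePoint.infty) := by
  refine OnePoint.tendsto_coe_infty.comp ?_
  rw [coclosedCompact_eq_cocompact, ← Metric.cobounded_eq_cocompact]
  exact tendsto_norm_atTop_iff_cobounded.mp h

lemma phi_tendsto {g : ℂ → ℂ} {c' : ℂ} (hm : MeromorphicAt g 0) {S : Set ℂ} (h0 : (0 : ℂ) ∉ S)
    {L : ℂ → ℂ} {B : ℝ} (hL1 : ∀ z ∈ S, -Real.log ‖z‖ ≤ ‖L z‖)
    (hL2 : ∀ z ∈ S, ‖L z‖ ≤ -Real.log ‖z‖ + B) :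
    ∃ q : OnePoint ℂ, Tendsto (fun z => ((g z + c' * L z : ℂ) : OnePoint ℂ)) (𝓝[S] 0) (𝓝 q) := by
  have hle : 𝓝[S] (0 : ℂ) ≤ 𝓝[≠] 0 := nhdsWithin_mono _ (fun z hz h => h0 (by
    have : z = 0 := h
    rwa [this] at hz))
  have hy : Tendsto (fun z : ℂ => -Real.log ‖z‖) (𝓝[S] 0) atTop := by
    refine tendsto_neg_atBot_atTop.comp (Real.tendsto_log_nhdsGT_zero.comp ?_)
    exact (tendsto_norm_nhdsNE_zero).mono_left hle
  by_cases ho : 0 ≤ meromorphicOrderAt g 0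
  · obtain ⟨ℓ, hℓ⟩ := (tendsto_nhds_iff_meromorphicOrderAt_nonneg hm).mpr ho
    have hℓ' := hℓ.mono_left hle
    by_cases hc : c' = 0
    · refine ⟨(ℓ : OnePoint ℂ), ?_⟩
      simp only [hc, zero_mul, add_zero]
      exact (OnePoint.continuous_coe.tendsto ℓ).comp hℓ'
    · refine ⟨_, coe_tendsto_infty ?_⟩
      have hc' : 0 < ‖c'‖ := norm_pos_iff.mpr hc
      refine tendsto_atTop_mono' _ ?_
        ((hy.const_mul_atTop hc').atTop_add hℓ'.norm.neg)
      filter_upwards [self_mem_nhdsWithin] with z hz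
      have h1 := norm_sub_le (g z + c' * L z) (g z)
      rw [add_sub_cancel_left, norm_mul] at h1
      have := mul_le_mul_of_nonneg_left (hL1 z hz) hc'.le
      linarith
  · refine ⟨_, coe_tendsto_infty ?_⟩
    push Not at ho
    obtain ⟨n, hn⟩ := WithTop.ne_top_iff_exists.mp (ne_top_of_lt ho)
    rw [← hn] at ho
    have hn0 : n < 0 := by exact_mod_cast ho
    obtain ⟨G, hG, hG0, hgG⟩ := (meromorphicOrderAt_eq_int_iff hm).mp hn.symm
    set κ := ‖G 0‖ / 2 with hκ
    have hG0' : 0 < ‖G 0‖ := norm_pos_iff.mpr hG0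
    have hκ0 : 0 < κ := by positivity
    have hGe : ∀ᶠ z in 𝓝[S] (0 : ℂ), κ < ‖G z‖ :=
      (hG.continuousAt.norm.eventually (lt_mem_nhds (by rw [hκ]; linarith))).filter_mono
        nhdsWithin_le_nhds
    have hlim : Tendsto (fun y : ℝ => y * (κ / 2 * y + -‖c'‖) + -(‖c'‖ * B)) atTop atTop := by
      refine tendsto_atTop_add_const_right _ _ (tendsto_id.atTop_mul_atTop₀ ?_)
      exact tendsto_atTop_add_const_right _ _ (tendsto_id.const_mul_atTop (by positivity))
    refine tendsto_atTop_mono' _ ?_ (hlim.comp hy)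
    filter_upwards [self_mem_nhdsWithin, hGe, hgG.filter_mono hle, hy.eventually_ge_atTop 0]
      with z hz hGz hgz hyz
    simp only [Function.comp_apply]
    set y := -Real.log ‖z‖ with hydef
    have hz0 : 0 < ‖z‖ := norm_pos_iff.mpr (fun h => h0 (h ▸ hz))
    have hzle : ‖z‖ ≤ 1 := by
      by_contra! h
      have := Real.log_pos h
      linarith
    have hzinv : ‖z‖⁻¹ = Real.exp y := by rw [hydef, Real.exp_neg, Real.exp_log hz0]
    have hpow : ‖z‖⁻¹ ≤ ‖z‖ ^ n := by
      rw [← zpow_neg_one]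
      exact zpow_le_zpow_right_of_le_one₀ hz0 hzle (by omega)
    have hgn : Real.exp y * κ ≤ ‖g z‖ := by
      rw [hgz, sub_zero, norm_smul, norm_zpow, ← hzinv]
      exact mul_le_mul hpow hGz.le hκ0.le (by positivity)
    have hq := Real.quadratic_le_exp_of_nonneg hyz
    have h1 := norm_sub_le (g z + c' * L z) (c' * L z)
    rw [add_sub_cancel_right, norm_mul] at h1
    have h2 := mul_le_mul_of_nonneg_left (hL2 z hz) (norm_nonneg c')
    have h3 : (y ^ 2 / 2) * κ ≤ Real.exp y * κ :=
      mul_le_mul_of_nonneg_right (by linarith) hκ0.le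
    nlinarith

theorem accumulation_values_countable
    (g : ℂ → ℂ) (c : ℂ)
    (hg : DifferentiableOn ℂ g (ball (0 : ℂ) 1 \ {0}))
    (hyp : ∀ θ' : ℝ, ∃ L' : ℂ → ℂ,
      DifferentiableOn ℂ L' (ball (0 : ℂ) 1 \ lray θ') ∧
      (∀ z ∈ ball (0 : ℂ) 1 \ lray θ', Complex.exp (L' z) = z) ∧
      InjOn (fun z => g z + c / (2 * (Real.pi : ℂ) * Complex.I) * L' z)
        (ball (0 : ℂ) 1 \ lray θ'))
    (θ : ℝ) (L : ℂ → ℂ)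
    (hL : DifferentiableOn ℂ L (ball (0 : ℂ) 1 \ lray θ))
    (hexp : ∀ z ∈ ball (0 : ℂ) 1 \ lray θ, Complex.exp (L z) = z)
    (hinj : InjOn (fun z => g z + c / (2 * (Real.pi : ℂ) * Complex.I) * L z)
      (ball (0 : ℂ) 1 \ lray θ)) :
    Set.Countable {p : OnePoint ℂ | ∃ u : ℕ → ℂ,
      (∀ n, u n ∈ ball (0 : ℂ) 1 \ lray θ) ∧
      Tendsto u atTop (𝓝 0) ∧
      Tendsto (fun n =>
          ((g (u n) + c / (2 * (Real.pi : ℂ) * Complex.I) * L (u n) : ℂ) :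
            OnePoint ℂ))
        atTop (𝓝 p)} := by
  have hm : MeromorphicAt g 0 := by
    refine g_mero (c' := c / (2 * (Real.pi : ℂ) * Complex.I)) hg fun α => ?_
    obtain ⟨L', h1, h2, h3⟩ := hyp (α + Real.pi)
    exact lift_inj h1 h2 h3
  have h0 : (0 : ℂ) ∉ ball (0 : ℂ) 1 \ lray θ := fun h => h.2 ⟨0, le_rfl, by simp⟩
  have hLre : ∀ z ∈ ball (0 : ℂ) 1 \ lray θ, (L z).re = Real.log ‖z‖ := by
    intro z hz
    rw [← hexp z hz, Complex.norm_exp, Real.log_exp, hexp z hz]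
  have hneg : ∀ z ∈ ball (0 : ℂ) 1 \ lray θ, Real.log ‖z‖ ≤ 0 := fun z hz =>
    Real.log_nonpos (norm_nonneg _) (mem_ball_zero_iff.mp hz.1).le
  obtain ⟨K, hK⟩ := branch_eq (α := θ - Real.pi) (L := L) (by simpa using hL) (by simpa using hexp)
  obtain ⟨q, hq⟩ := phi_tendsto (c' := c / (2 * (Real.pi : ℂ) * Complex.I)) hm h0 (L := L)
    (B := |θ| + 2 * Real.pi + ‖K‖)
    (fun z hz => by
      rw [← hLre z hz]
      exact (neg_le_abs _).trans (Complex.abs_re_le_norm _))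
    (fun z hz => by
      obtain ⟨w, hw, rfl⟩ := exp_surj_slit hz
      refine (Complex.norm_le_abs_re_add_abs_im _).trans ?_
      rw [hLre _ hz, abs_of_nonpos (hneg _ hz), hK w hw, Complex.add_im]
      have h1 := abs_add_le w.im K.im
      have h2 := Complex.abs_im_le_norm K
      have h3 := hw.2
      simp only [mem_ofPred_eq, abs_lt] at h3
      have h4 : |w.im| ≤ |θ| + 2 * Real.pi := by
        have := neg_abs_le θ
        have := le_abs_self θ
        rw [abs_le]
        have := Real.pi_pos
        constructor <;> linarith
      linarith)
  refine (countable_singleton q).mono ?_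
  rintro p ⟨u, hu, hu0, hp⟩
  have hu' : Tendsto u atTop (𝓝[ball (0 : ℂ) 1 \ lray θ] 0) :=
    tendsto_nhdsWithin_iff.mpr ⟨hu0, Eventually.of_forall hu⟩
  exact tendsto_nhds_unique hp (hq.comp hu')
end
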